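/- There exist universal constants c > 0 and n₀ such that for all n ≥ n₀ and k with n ≤ k ≤ n²: if a randomized t-round adaptive algorithm making k exact linear measurements per round is such that for every n×n real matrix A with σ₁(A) ≥ 2·σ₂(A) it outputs a matrix B of rank at most 1 satisfying ‖A − B‖_F² ≤ (1 + 1/n)·min{‖A − X‖_F² : rank(X) ≤ 1} with probability at least 99/100 (over the seed), then t ≥ c·log(n²/k)/log log n. -/

import Mathlib

/-!
Plant a rank-one matrix `S = (256 / √n) • u vᵀ`, with `u` and `v` independent uniform sign vectors,
in a standard Gaussian matrix `H`. With large probability `‖H‖ ≤ 16 √n`, so `S + H` has a spectral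
gap, and any rank-one matrix within a factor `1 + 1/n` of the best rank-one approximation of `S + H`
must be close to `S`. By Yao's principle it suffices to bound the probability that a deterministic
algorithm finds `S`.

After each round the posterior of `(u, v)` is described by a weight `w` on pairs of sign vectors,
and progress is measured by the functional entropy of `w`. A round reveals Gaussian observations
whose mean is the image of `S` under an orthonormal query, and the average entropy increases by at
most half the average squared norm of this mean. By the Gibbs variational principle and a bound on
the exponential moments of the order-two chaos `‖M vec(u vᵀ)‖²`, this energy is at most a constant
times the entropy plus a term of order `k / n`. So the potential `ent w + k / (2n)` grows by at most
a constant factor per round, while finding `S` requires entropy of order `n`: this forces the number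
of rounds to be at least of order `log (n² / k)`.
-/

open MeasureTheory ProbabilityTheory Matrix
open scoped ENNReal Classical

noncomputable section

/-- Squared Euclidean norm of a finitely-indexed real vector. -/
def sqNorm {ι : Type*} [Fintype ι] (x : ι → ℝ) : ℝ := ∑ i, x i ^ 2

/-- Squared Frobenius norm of a real matrix. -/
def frobSq {m n : Type*} [Fintype m] [Fintype n] (A : Matrix m n ℝ) : ℝ :=
  ∑ i, ∑ j, A i j ^ 2

/-- Spectral (ℓ₂ operator) norm of a real matrix. -/
def specNorm {m n : Type*} [Fintype m] [Fintype n] (A : Matrix m n ℝ) : ℝ :=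
  sSup ((fun x : n → ℝ => Real.sqrt (sqNorm (A.mulVec x))) '' {x | sqNorm x ≤ 1})

/-- `i`-th largest singular value (1-based), characterized via
`σ_i(A) = min {‖A − X‖ : rank X ≤ i − 1}`. -/
def singVal {m n : Type*} [Fintype m] [Fintype n] (A : Matrix m n ℝ) (i : ℕ) : ℝ :=
  sInf {c | ∃ X : Matrix m n ℝ, X.rank ≤ i - 1 ∧ c = specNorm (A - X)}

/-- Flattening of an `n × n` matrix into a vector in `ℝ^{n²}`. -/
def vec (n : ℕ) (A : Matrix (Fin n) (Fin n) ℝ) : Fin (n * n) → ℝ :=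
  fun i => A (finProdFinEquiv.symm i).1 (finProdFinEquiv.symm i).2

/-- `u ⊗ v = vec (u vᵀ) ∈ ℝ^{n²}`. -/
def tensor {n : ℕ} (u v : Fin n → ℝ) : Fin (n * n) → ℝ :=
  vec n (Matrix.of fun i j => u i * v j)

/-- Standard Gaussian measure on `ι → ℝ`. -/
def stdGaussian (ι : Type*) [Fintype ι] : Measure (ι → ℝ) :=
  Measure.pi fun _ => gaussianReal 0 1

/-- Standard Gaussian measure on `n × n` matrices (as `Fin n → Fin n → ℝ`). -/
def stdGaussianMat (n : ℕ) : Measure (Fin n → Fin n → ℝ) :=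
  Measure.pi fun _ => stdGaussian (Fin n)

/-- Query maps of a deterministic `t`-round adaptive algorithm making `k` linear
measurements per round on inputs in `ℝ^N`. -/
def QueryMaps (N k t : ℕ) : Type :=
  (j : Fin t) → (Fin (j : ℕ) → (Fin k → ℝ)) → Matrix (Fin k) (Fin N) ℝ

namespace QueryMaps

variable {N k t : ℕ}

/-- Restriction of a round-`j` history to the first `i` rounds. -/
def prefixHist {j : Fin t} (h : Fin (j : ℕ) → Fin k → ℝ) {i : Fin t}
    (hij : (i : ℕ) < (j : ℕ)) : Fin (i : ℕ) → Fin k → ℝ :=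
  fun l => h ⟨l.1, l.isLt.trans hij⟩

/-- Validity of query maps: measurability, orthonormal rows within each round, and
orthogonality across rounds along consistent histories. -/
def Valid (Q : QueryMaps N k t) : Prop :=
  (∀ (j : Fin t) (i : Fin k) (l : Fin N), Measurable fun h => Q j h i l) ∧
  (∀ (j : Fin t) (h : Fin (j : ℕ) → Fin k → ℝ), Q j h * (Q j h)ᵀ = 1) ∧
  (∀ (j i : Fin t) (hij : (i : ℕ) < (j : ℕ)) (h : Fin (j : ℕ) → Fin k → ℝ),
      Q j h * (Q i (prefixHist h hij))ᵀ = 0)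

/-- Responses of the algorithm under exact linear measurements of `a`. -/
def resp (Q : QueryMaps N k t) (a : Fin N → ℝ) (j : Fin t) : Fin k → ℝ :=
  (Q j fun i => resp Q a ⟨i.1, i.isLt.trans j.isLt⟩).mulVec a
termination_by (j : ℕ)
decreasing_by exact i.isLt

/-- Responses of the algorithm under noisy linear measurements of `a`, with fresh
per-round noise `g`. -/
def nresp (Q : QueryMaps N k t) (a : Fin N → ℝ) (g : Fin t → Fin k → ℝ) (j : Fin t) :
    Fin k → ℝ :=
  ((Q j fun i => nresp Q a g ⟨i.1, i.isLt.trans j.isLt⟩).mulVec a) + g j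
termination_by (j : ℕ)
decreasing_by exact i.isLt

/-- The `tk × N` matrix stacking all the query matrices realized along the run of the
algorithm on input `a` (exact measurements). -/
def runMat (Q : QueryMaps N k t) (a : Fin N → ℝ) : Matrix (Fin t × Fin k) (Fin N) ℝ :=
  Matrix.of fun p l =>
    Q p.1 (fun i => resp Q a ⟨i.1, i.isLt.trans p.1.isLt⟩) p.2 l

end QueryMaps

/-- Kullback–Leibler divergence, valued in `[0, ∞]`, defined with the natural
logarithm. -/
def klDiv {Ω : Type*} [MeasurableSpace Ω] (P Q : Measure Ω) : ℝ≥0∞ :=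
  if P ≪ Q ∧ Integrable (fun x => Real.log ((P.rnDeriv Q x).toReal)) P then
    ENNReal.ofReal (∫ x, Real.log ((P.rnDeriv Q x).toReal) ∂P)
  else ⊤


/-- The rank-`r` plant `Σ_{i=1}^r uᵢ vᵢᵀ` built from the rows of `U` and `V`. -/
def plant {n r : ℕ} (U V : Fin r → Fin n → ℝ) : Matrix (Fin n) (Fin n) ℝ :=
  Matrix.of fun i j => ∑ l, U l i * V l j

/-- Schatten-`p` norm (real `p`), via the singular values. -/
def schattenNorm {n : ℕ} (p : ℝ) (A : Matrix (Fin n) (Fin n) ℝ) : ℝ :=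
  (∑ i ∈ Finset.range n, singVal A (i + 1) ^ p) ^ (1 / p)

/-- Ky-Fan `p` norm: sum of the `p` largest singular values. -/
def kyFanNorm {n : ℕ} (p : ℕ) (A : Matrix (Fin n) (Fin n) ℝ) : ℝ :=
  ∑ i ∈ Finset.range p, singVal A (i + 1)

open scoped BigOperators

/-! ### The standard Gaussian measure -/

section Gaussian

lemma integrable_of_mem_Icc {X : Type*} [MeasurableSpace X] {μ : Measure X} [IsFiniteMeasure μ]
    {f : X → ℝ} (hf : Measurable f) (h01 : ∀ x, f x ∈ Set.Icc 0 1) : Integrable f μ :=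
  .of_bound hf.aestronglyMeasurable 1 <| .of_forall fun x => by
    rw [Real.norm_of_nonneg (h01 x).1]
    exact (h01 x).2

variable {ι κ : Type*} [Fintype ι] [Fintype κ]

lemma sqNorm_eq_dotProduct (x : ι → ℝ) : sqNorm x = x ⬝ᵥ x := by
  simp only [sqNorm, dotProduct, sq]

lemma sqNorm_nonneg (x : ι → ℝ) : 0 ≤ sqNorm x := Finset.sum_nonneg fun _ _ => sq_nonneg _

lemma sqNorm_smul (c : ℝ) (x : ι → ℝ) : sqNorm (c • x) = c ^ 2 * sqNorm x := by
  simp only [sqNorm, Pi.smul_apply, smul_eq_mul, mul_pow, Finset.mul_sum]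

instance : IsProbabilityMeasure (stdGaussian ι) :=
  inferInstanceAs (IsProbabilityMeasure (Measure.pi fun _ => gaussianReal 0 1))

lemma dual_apply_eq_dotProduct [DecidableEq ι] (L : StrongDual ℝ (ι → ℝ)) (x : ι → ℝ) :
    L x = (fun i => L (Pi.single i 1)) ⬝ᵥ x := by
  conv_lhs => rw [pi_eq_sum_univ' x, map_sum]
  simp only [map_smul, smul_eq_mul, dotProduct, mul_comm]

lemma charFunDual_stdGaussian_pi [DecidableEq ι] (L : StrongDual ℝ (ι → ℝ)) :
    charFunDual (stdGaussian ι) L =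
      Complex.exp (-(sqNorm fun i => L (Pi.single i 1)) / 2 : ℝ) := by
  have hcoord (i : ι) : charFunDual (gaussianReal 0 1) (L.comp (.single ℝ (fun _ : ι => ℝ) i)) =
      Complex.exp (-(L (Pi.single i 1) ^ 2) / 2 : ℝ) := by
    have hmul : ⇑(L.comp (.single ℝ (fun _ : ι => ℝ) i)) = (L (Pi.single i 1) * ·) := by
      funext x
      simp [dual_apply_eq_dotProduct L (Pi.single i x)]
    rw [charFunDual_eq_charFun_map_one, hmul, gaussianReal_map_const_mul, charFun_gaussianReal]
    congr 1
    simp [neg_div]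
  rw [_root_.stdGaussian, charFunDual_pi, Finset.prod_congr rfl fun i _ => hcoord i,
    ← Complex.exp_sum, ← Complex.ofReal_sum, ← Finset.sum_div, Finset.sum_neg_distrib, sqNorm]

lemma map_mulVec_stdGaussian [DecidableEq ι] (A : Matrix ι κ ℝ) (hA : A * Aᵀ = 1) :
    (stdGaussian κ).map (A *ᵥ ·) = stdGaussian ι := by
  let T : (κ → ℝ) →L[ℝ] (ι → ℝ) := LinearMap.toContinuousLinearMap A.mulVecLin
  have hT : (A *ᵥ ·) = T := rfl
  rw [hT]
  have := Measure.isFiniteMeasure_map (stdGaussian κ) T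
  refine Measure.ext_of_charFunDual (funext fun L => ?_)
  rw [charFunDual_map, charFunDual_stdGaussian_pi, charFunDual_stdGaussian_pi]
  congr 3
  set ξ : ι → ℝ := fun i => L (Pi.single i 1) with hξ
  have hcoord : (fun j => (L.comp T) (Pi.single j 1)) = ξ ᵥ* A := by
    funext j
    rw [ContinuousLinearMap.comp_apply, dual_apply_eq_dotProduct, ← hξ, ← hT, dotProduct_mulVec,
      dotProduct_single_one]
  rw [hcoord, sqNorm_eq_dotProduct, sqNorm_eq_dotProduct, ← dotProduct_mulVec, ← mulVec_transpose,
    mulVec_mulVec, hA, one_mulVec]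

/-- A batch of orthonormal measurements of a Gaussian vector can be resampled independently of the
component orthogonal to it. -/
lemma map_transpose_mulVec_add_stdGaussian [DecidableEq κ] (Q : Matrix κ ι ℝ)
    (hQ : Q * Qᵀ = 1) :
    ((stdGaussian κ).prod (stdGaussian ι)).map
      (fun p => Qᵀ *ᵥ p.1 + (p.2 - Qᵀ *ᵥ (Q *ᵥ p.2))) = stdGaussian ι := by
  have horth : fromCols Qᵀ (1 - Qᵀ * Q) * (fromCols Qᵀ (1 - Qᵀ * Q))ᵀ = 1 := by
    simp only [transpose_fromCols, fromCols_mul_fromRows, transpose_sub, transpose_mul,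
      transpose_transpose, transpose_one, mul_sub, sub_mul, Matrix.mul_one, Matrix.one_mul]
    rw [Matrix.mul_assoc, ← Matrix.mul_assoc Q, hQ, Matrix.one_mul]
    abel
  have hsum := measurePreserving_sumPiEquivProdPi fun _ : κ ⊕ ι => gaussianReal 0 1
  conv_rhs => rw [← map_mulVec_stdGaussian _ horth]
  change ((Measure.pi fun _ => gaussianReal 0 1).prod (Measure.pi fun _ => gaussianReal 0 1)).map
    _ = (Measure.pi fun _ => gaussianReal 0 1).map _
  rw [← hsum.map_eq, Measure.map_map (by fun_prop) hsum.measurable]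
  congr 1
  funext x
  simp only [Function.comp_apply, fromCols_mulVec, sub_mulVec, one_mulVec, ← mulVec_mulVec]
  rfl

/-- Likelihood ratio of the Gaussian measure with mean `m` and identity covariance against the
standard one. -/
def gaussianLik (m g : ι → ℝ) : ℝ := Real.exp (m ⬝ᵥ g - sqNorm m / 2)

lemma gaussianLik_pos (m g : ι → ℝ) : 0 < gaussianLik m g := Real.exp_pos _

lemma continuous_gaussianLik (m : ι → ℝ) : Continuous (gaussianLik m) := by
  unfold gaussianLik
  fun_prop

lemma gaussianLik_eq_prod (m g : ι → ℝ) :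
    gaussianLik m g = ∏ i, Real.exp (m i * g i - m i ^ 2 / 2) := by
  rw [gaussianLik, ← Real.exp_sum, Finset.sum_sub_distrib, ← Finset.sum_div, sqNorm, dotProduct]

lemma gaussianReal_eq_withDensity (m : ℝ) :
    gaussianReal m 1 =
      (gaussianReal 0 1).withDensity fun x => ENNReal.ofReal (Real.exp (m * x - m ^ 2 / 2)) := by
  rw [gaussianReal_of_var_ne_zero _ one_ne_zero, gaussianReal_of_var_ne_zero _ one_ne_zero,
    ← withDensity_mul _ (measurable_gaussianPDF _ _) (by fun_prop)]
  congr 1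
  funext x
  simp only [gaussianPDF, gaussianPDFReal, Pi.mul_apply]
  rw [← ENNReal.ofReal_mul (by positivity), mul_assoc _ (Real.exp _), ← Real.exp_add]
  congr 3
  simp only [sub_zero, NNReal.coe_one, mul_one]
  ring

lemma map_add_stdGaussian_eq_pi (m : ι → ℝ) :
    (stdGaussian ι).map (m + ·) = Measure.pi fun i => gaussianReal (m i) 1 := by
  have (i : ι) : SigmaFinite ((gaussianReal 0 1).map (m i + ·)) := by
    rw [gaussianReal_map_const_add]
    infer_instance
  have h := Measure.pi_map_pi (μ := fun _ : ι => gaussianReal 0 1)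
    (f := fun i x => m i + x) (fun i => by fun_prop)
  simp only [gaussianReal_map_const_add, zero_add] at h
  exact h

lemma map_add_stdGaussian (m : ι → ℝ) :
    (stdGaussian ι).map (m + ·) =
      (stdGaussian ι).withDensity fun g => ENNReal.ofReal (gaussianLik m g) := by
  rw [map_add_stdGaussian_eq_pi]
  refine Measure.pi_eq fun s hs => ?_
  have hint (i : ι) : Integrable (fun x => Real.exp (m i * x - m i ^ 2 / 2))
      ((gaussianReal 0 1).restrict (s i)) := by
    simp_rw [sub_eq_add_neg, Real.exp_add]
    exact ((integrable_exp_mul_gaussianReal (m i)).mul_const _).restrict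
  rw [withDensity_apply _ (MeasurableSet.univ_pi hs), _root_.stdGaussian, Measure.restrict_pi_pi]
  simp_rw [gaussianLik_eq_prod]
  rw [← ofReal_integral_eq_lintegral_ofReal (Integrable.fintype_prod hint)
      (.of_forall fun x => by positivity),
    integral_fintype_prod_eq_prod (f := fun i x => Real.exp (m i * x - m i ^ 2 / 2)),
    ENNReal.ofReal_prod_of_nonneg fun i _ => integral_nonneg fun x => by positivity]
  refine Finset.prod_congr rfl fun i _ => ?_
  rw [ofReal_integral_eq_lintegral_ofReal (hint i) (.of_forall fun x => by positivity),
    gaussianReal_eq_withDensity (m i), withDensity_apply _ (hs i)]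

/-- The Cameron–Martin formula. -/
lemma integral_add_stdGaussian (m : ι → ℝ) {F : (ι → ℝ) → ℝ} (hF : Measurable F) :
    ∫ g, F (m + g) ∂stdGaussian ι = ∫ g, gaussianLik m g * F g ∂stdGaussian ι := by
  have hlik := (continuous_gaussianLik m).measurable
  rw [← integral_map (φ := (m + ·)) (by fun_prop) hF.aestronglyMeasurable, map_add_stdGaussian,
    integral_withDensity_eq_integral_toReal_smul (by fun_prop) (by simp)]
  simp only [ENNReal.toReal_ofReal (gaussianLik_pos m _).le, smul_eq_mul]

lemma integrable_gaussianLik_mul (m : ι → ℝ) {F : (ι → ℝ) → ℝ} (hF : Measurable F)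
    (h : Integrable (fun g => F (m + g)) (stdGaussian ι)) :
    Integrable (fun g => gaussianLik m g * F g) (stdGaussian ι) := by
  have hlik := (continuous_gaussianLik m).measurable
  have hmap : Integrable F ((stdGaussian ι).map (m + ·)) :=
    (integrable_map_measure hF.aestronglyMeasurable (by fun_prop)).2 h
  rw [map_add_stdGaussian, integrable_withDensity_iff (by fun_prop) (by simp)] at hmap
  simpa only [ENNReal.toReal_ofReal (gaussianLik_pos m _).le, mul_comm] using hmap

lemma integrable_dotProduct_stdGaussian (m : ι → ℝ) :
    Integrable (fun g => m ⬝ᵥ g) (stdGaussian ι) := by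
  have hid : Integrable (fun x : ℝ => x) (gaussianReal 0 1) :=
    (memLp_id_gaussianReal 1).integrable le_rfl
  exact integrable_finsetSum _ fun i _ =>
    (integrable_comp_eval (μ := fun _ : ι => gaussianReal 0 1) hid).const_mul _

lemma integral_dotProduct_stdGaussian (m : ι → ℝ) :
    ∫ g, m ⬝ᵥ g ∂stdGaussian ι = 0 := by
  have hodd : ∫ g, m ⬝ᵥ g ∂stdGaussian ι = -∫ g, m ⬝ᵥ g ∂stdGaussian ι := by
    conv_lhs => rw [← map_mulVec_stdGaussian (-1 : Matrix ι ι ℝ) (by simp)]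
    rw [integral_map (by fun_prop) (by fun_prop), ← integral_neg]
    simp only [neg_mulVec, one_mulVec, dotProduct_neg]
  linarith

lemma integrable_gaussianLik_mul_affine (m : ι → ℝ) (c : ℝ) :
    Integrable (fun g => gaussianLik m g * (m ⬝ᵥ g + c)) (stdGaussian ι) := by
  refine integrable_gaussianLik_mul m (F := fun g => m ⬝ᵥ g + c) (by fun_prop) ?_
  simp_rw [dotProduct_add]
  exact (((integrable_const _).add (integrable_dotProduct_stdGaussian m)).add (integrable_const _))

lemma integral_gaussianLik_mul_affine (m : ι → ℝ) (c : ℝ) :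
    ∫ g, gaussianLik m g * (m ⬝ᵥ g + c) ∂stdGaussian ι = sqNorm m + c := by
  rw [← integral_add_stdGaussian m (F := fun g => m ⬝ᵥ g + c) (by fun_prop)]
  have hsplit (g : ι → ℝ) : m ⬝ᵥ (m + g) + c = (sqNorm m + c) + m ⬝ᵥ g := by
    rw [dotProduct_add, sqNorm_eq_dotProduct]
    ring
  simp_rw [hsplit]
  rw [integral_add (integrable_const _) (integrable_dotProduct_stdGaussian m),
    integral_dotProduct_stdGaussian, integral_const, probReal_univ, one_smul, add_zero]

lemma integrable_gaussianLik (m : ι → ℝ) : Integrable (gaussianLik m) (stdGaussian ι) := by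
  simpa using integrable_gaussianLik_mul m (F := fun _ => 1) (by fun_prop) (integrable_const _)

lemma integral_gaussianLik (m : ι → ℝ) : ∫ g, gaussianLik m g ∂stdGaussian ι = 1 := by
  simpa using (integral_add_stdGaussian m (F := fun _ => 1) (by fun_prop)).symm

lemma stdGaussian_tail_le {m : ι → ℝ} (hm : sqNorm m ≤ 1) {τ : ℝ} (hτ : 0 ≤ τ) :
    (stdGaussian ι).real {g | τ < m ⬝ᵥ g} ≤ Real.exp (-(τ ^ 2 / 2)) := by
  have hmarkov := mul_meas_ge_le_integral_of_nonneg (μ := stdGaussian ι)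
    (.of_forall fun g => (gaussianLik_pos (τ • m) g).le) (integrable_gaussianLik (τ • m))
    (Real.exp (τ ^ 2 / 2))
  rw [integral_gaussianLik] at hmarkov
  have hsub : {g | τ < m ⬝ᵥ g} ⊆ {g | Real.exp (τ ^ 2 / 2) ≤ gaussianLik (τ • m) g} := by
    intro g (hg : τ < m ⬝ᵥ g)
    refine Real.exp_le_exp.2 ?_
    rw [smul_dotProduct, smul_eq_mul, sqNorm_smul]
    nlinarith [mul_le_mul_of_nonneg_left hg.le hτ, mul_le_mul_of_nonneg_left hm (sq_nonneg τ)]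
  rw [Real.exp_neg, ← one_div, le_div_iff₀' (Real.exp_pos _)]
  exact (mul_le_mul_of_nonneg_left (measureReal_mono hsub) (Real.exp_pos _).le).trans hmarkov

lemma integrable_sq_gaussianReal : Integrable (fun x : ℝ => x ^ 2) (gaussianReal 0 1) :=
  (memLp_id_gaussianReal 2).integrable_sq

lemma integrable_sqNorm_stdGaussian : Integrable sqNorm (stdGaussian ι) :=
  integrable_finsetSum _ fun _ _ =>
    integrable_comp_eval (μ := fun _ : ι => gaussianReal 0 1) integrable_sq_gaussianReal

lemma integral_sqNorm_stdGaussian : ∫ g, sqNorm g ∂stdGaussian ι = Fintype.card ι := by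
  have hvar : ∫ x : ℝ, x ^ 2 ∂gaussianReal 0 1 = 1 := by
    simpa [variance_of_integral_eq_zero aemeasurable_id integral_id_gaussianReal] using
      variance_id_gaussianReal (μ := 0) (v := 1)
  simp only [sqNorm, _root_.stdGaussian]
  rw [integral_finsetSum _ fun i _ =>
    integrable_comp_eval (μ := fun _ : ι => gaussianReal 0 1) integrable_sq_gaussianReal]
  simp_rw [integral_comp_eval (μ := fun _ : ι => gaussianReal 0 1) (f := fun x : ℝ => x ^ 2)
    (by fun_prop), hvar]
  simp

end Gaussian

/-! ### Functional entropy -/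

section Entropy

variable {Θ : Type*} [Fintype Θ]

/-- Functional entropy of a weight `w` with respect to the uniform distribution on `Θ`, i.e.
`𝔼 w · KL(w / ∑ w ‖ uniform)`. Being homogeneous of degree one, it can be evaluated on unnormalised
posterior weights. -/
def ent (w : Θ → ℝ) : ℝ :=
  𝔼 θ, w θ * Real.log (w θ) - (𝔼 θ, w θ) * Real.log (𝔼 θ, w θ)

lemma continuous_expect {X : Type*} [TopologicalSpace X] {f : Θ → X → ℝ}
    (hf : ∀ θ, Continuous (f θ)) : Continuous fun x => 𝔼 θ, f θ x := by
  simp only [Fintype.expect_eq_sum_div_card]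
  fun_prop

lemma continuous_ent : Continuous (ent : (Θ → ℝ) → ℝ) :=
  (continuous_expect fun θ => Real.continuous_mul_log.comp (continuous_apply θ)).sub
    (Real.continuous_mul_log.comp (continuous_expect fun θ => continuous_apply θ))

variable [Nonempty Θ] {w : Θ → ℝ}

lemma ent_const (c : ℝ) : ent (fun _ : Θ => c) = 0 := by
  simp only [ent, Fintype.expect_const, sub_self]

lemma expect_pos_of_pos (hw : ∀ θ, 0 < w θ) : 0 < 𝔼 θ, w θ :=
  Finset.expect_pos (fun θ _ => hw θ) Finset.univ_nonempty

lemma mul_log_sub_log_le {a b : ℝ} (ha : 0 < a) (hb : 0 < b) :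
    a * (Real.log b - Real.log a) ≤ b - a := by
  have h := mul_le_mul_of_nonneg_left (Real.log_le_sub_one_of_pos (div_pos hb ha)) ha.le
  rwa [Real.log_div hb.ne' ha.ne', mul_sub_one, mul_div_cancel₀ _ ha.ne'] at h

/-- Tangent line bound for the concave term of the entropy. -/
lemma ent_le_expect_sub_add (hw : ∀ θ, 0 < w θ) {V : ℝ} (hV : 0 < V) :
    ent w ≤ (𝔼 θ, w θ * (Real.log (w θ) - Real.log V)) - 𝔼 θ, w θ + V := by
  have h := mul_log_sub_log_le (expect_pos_of_pos hw) hV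
  simp only [ent, mul_sub, Finset.expect_sub_distrib, ← Finset.expect_mul] at h ⊢
  linarith

/-- The Gibbs (Donsker–Varadhan) variational inequality. -/
lemma expect_mul_le_ent_add (hw : ∀ θ, 0 < w θ) (f : Θ → ℝ) :
    𝔼 θ, w θ * f θ ≤ ent w + (𝔼 θ, w θ) * Real.log (𝔼 θ, Real.exp (f θ)) := by
  have hW := expect_pos_of_pos hw
  have hZ : 0 < 𝔼 θ, Real.exp (f θ) := expect_pos_of_pos fun θ => Real.exp_pos (f θ)
  have hpoint (θ : Θ) : w θ * (f θ + Real.log (𝔼 θ, w θ) - Real.log (𝔼 θ, Real.exp (f θ))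
      - Real.log (w θ)) ≤ Real.exp (f θ) * ((𝔼 θ, w θ) / 𝔼 θ, Real.exp (f θ)) - w θ := by
    have h := mul_log_sub_log_le (hw θ) (mul_pos (Real.exp_pos (f θ)) (div_pos hW hZ))
    rwa [Real.log_mul (Real.exp_pos _).ne' (div_pos hW hZ).ne', Real.log_exp,
      Real.log_div hW.ne' hZ.ne', ← add_sub_assoc] at h
  have h := Finset.expect_le_expect fun θ (_ : θ ∈ Finset.univ) => hpoint θ
  simp only [mul_sub, mul_add, Finset.expect_sub_distrib, Finset.expect_add_distrib,
    ← Finset.expect_mul, mul_div_cancel₀ _ hZ.ne', sub_self] at h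
  rw [ent]
  linarith

lemma ent_nonneg (hw : ∀ θ, 0 < w θ) : 0 ≤ ent w := by
  simpa using expect_mul_le_ent_add hw fun _ => 0

lemma expect_indicator_le_ent_add (hw : ∀ θ, 0 < w θ) (E : Finset Θ) {s : ℝ}
    (hE : (E.card : ℝ) ≤ Real.exp (-s) * Fintype.card Θ) :
    s * 𝔼 θ, w θ * (if θ ∈ E then 1 else 0) ≤ ent w + 𝔼 θ, w θ := by
  have hcard : (0 : ℝ) < Fintype.card Θ := Nat.cast_pos.2 Fintype.card_pos
  have hexp : 𝔼 θ, Real.exp (s * if θ ∈ E then 1 else 0) ≤ 2 := by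
    calc 𝔼 θ, Real.exp (s * if θ ∈ E then 1 else 0)
        ≤ 𝔼 θ, (1 + Real.exp s * if θ ∈ E then 1 else 0) := by
          refine Finset.expect_le_expect fun θ _ => ?_
          split_ifs <;> simp
      _ = 1 + Real.exp s * (E.card / Fintype.card Θ) := by
          rw [Finset.expect_add_distrib, Fintype.expect_const, ← Finset.mul_expect,
            Fintype.expect_eq_sum_div_card]
          simp
      _ ≤ 1 + Real.exp s * Real.exp (-s) := by
          gcongr
          exact (div_le_iff₀ hcard).2 hE
      _ = 2 := by rw [← Real.exp_add, add_neg_cancel, Real.exp_zero, one_add_one_eq_two]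
  have hlog : Real.log (𝔼 θ, Real.exp (s * if θ ∈ E then 1 else 0)) ≤ 1 :=
    (Real.log_le_sub_one_of_pos (expect_pos_of_pos fun _ => Real.exp_pos _)).trans (by linarith)
  calc s * 𝔼 θ, w θ * (if θ ∈ E then 1 else 0)
      = 𝔼 θ, w θ * (s * if θ ∈ E then 1 else 0) := by
        rw [Finset.mul_expect]
        simp only [mul_left_comm]
    _ ≤ ent w + (𝔼 θ, w θ) * 1 := (expect_mul_le_ent_add hw _).trans
        (add_le_add le_rfl (mul_le_mul_of_nonneg_left hlog (expect_pos_of_pos hw).le))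
    _ = ent w + 𝔼 θ, w θ := by rw [mul_one]

end Entropy

/-! ### Peeling off the first round -/

lemma measurable_vecCons {X E : Type*} [MeasurableSpace X] [MeasurableSpace E] {s : ℕ} {u : X → E}
    {v : X → Fin s → E} (hu : Measurable u) (hv : Measurable v) :
    Measurable fun x => vecCons (u x) (v x) := by
  refine measurable_pi_lambda _ (Fin.cases ?_ fun i => ?_)
  · simpa only [cons_val_zero] using hu
  · simp only [cons_val_succ]
    exact (measurable_pi_apply i).comp hv

namespace QueryMaps

variable {N k t : ℕ}

/-- The query matrix of the first round, which cannot depend on the (empty) history. -/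
def first (Q : QueryMaps N k (t + 1)) : Matrix (Fin k) (Fin N) ℝ := Q 0 fun i => i.elim0

/-- The algorithm that remains once the first round has been answered by `r`. -/
def tail (Q : QueryMaps N k (t + 1)) (r : Fin k → ℝ) : QueryMaps N k t :=
  fun j h => Q j.succ (vecCons r h)

lemma apply_zero_eq_first (Q : QueryMaps N k (t + 1))
    (h : Fin ((0 : Fin (t + 1)) : ℕ) → Fin k → ℝ) : Q 0 h = Q.first :=
  congrArg (Q 0) (funext fun i => i.elim0)

lemma Valid.first_mul_transpose {Q : QueryMaps N k (t + 1)} (hQ : Q.Valid) :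
    Q.first * Q.firstᵀ = 1 :=
  hQ.2.1 0 _

lemma Valid.tail {Q : QueryMaps N k (t + 1)} (hQ : Q.Valid) (r : Fin k → ℝ) :
    (Q.tail r).Valid := by
  obtain ⟨hmeas, hrows, hcross⟩ := hQ
  refine ⟨fun j i l => ?_, fun j h => hrows _ _, fun j i hij h => ?_⟩
  · exact (hmeas j.succ i l).comp (measurable_vecCons measurable_const measurable_id)
  · have hij' : (i.succ : ℕ) < (j.succ : ℕ) := Nat.succ_lt_succ hij
    have hprefix : prefixHist (j := j.succ) (i := i.succ) (vecCons r h) hij' =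
        vecCons r (prefixHist h hij) := by
      funext a
      refine Fin.cases ?_ (fun b => ?_) a <;> rfl
    exact (congrArg (fun h' => Q j.succ (vecCons r h) * (Q i.succ h')ᵀ) hprefix).symm.trans
      (hcross j.succ i.succ hij' (vecCons r h))

lemma Valid.tail_mul_first_transpose {Q : QueryMaps N k (t + 1)} (hQ : Q.Valid) (r : Fin k → ℝ)
    (j : Fin t) (h : Fin (j : ℕ) → Fin k → ℝ) : Q.tail r j h * Q.firstᵀ = 0 :=
  (congrArg (fun M => Q.tail r j h * Mᵀ) (apply_zero_eq_first Q _)).symm.trans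
    (hQ.2.2 j.succ 0 j.succ_pos (vecCons r h))

lemma resp_zero (Q : QueryMaps N k (t + 1)) (a : Fin N → ℝ) : resp Q a 0 = Q.first *ᵥ a := by
  rw [resp]
  exact congrArg (· *ᵥ a) (apply_zero_eq_first Q _)

lemma resp_succ (Q : QueryMaps N k (t + 1)) (a : Fin N → ℝ) (j : Fin t) :
    resp Q a j.succ = resp (Q.tail (Q.first *ᵥ a)) a j := by
  rw [← resp_zero]
  obtain ⟨j, hj⟩ := j
  induction j using Nat.strong_induction_on with
  | _ j ih =>
    rw [resp, resp, tail]
    congr 2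
    funext i
    refine Fin.cases rfl (fun b => ?_) i
    rw [cons_val_succ]
    exact ih b b.isLt (b.isLt.trans hj)

lemma resp_eq_vecCons (Q : QueryMaps N k (t + 1)) (a : Fin N → ℝ) :
    resp Q a = vecCons (Q.first *ᵥ a) (resp (Q.tail (Q.first *ᵥ a)) a) :=
  funext <| Fin.cases (by rw [cons_val_zero, resp_zero]) fun j => by
    rw [cons_val_succ, resp_succ]

lemma resp_congr (Q : QueryMaps N k t) {a b : Fin N → ℝ} (h : ∀ j h, Q j h *ᵥ a = Q j h *ᵥ b) :
    resp Q a = resp Q b := by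
  funext ⟨j, hj⟩
  induction j using Nat.strong_induction_on with
  | _ j ih =>
    rw [resp, resp, h]
    congr 2
    exact funext fun i => ih i i.isLt _

/-- Changing the input along the first-round queries only affects the first response, since the
later queries are orthogonal to them. -/
lemma Valid.resp_add {Q : QueryMaps N k (t + 1)} (hQ : Q.Valid) (b : Fin N → ℝ) (g : Fin k → ℝ)
    (G : Fin N → ℝ) :
    resp Q (b + (Q.firstᵀ *ᵥ g + (G - Q.firstᵀ *ᵥ (Q.first *ᵥ G)))) =
      vecCons (Q.first *ᵥ b + g) (resp (Q.tail (Q.first *ᵥ b + g)) (b + G)) := by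
  have hfirst : Q.first *ᵥ (b + (Q.firstᵀ *ᵥ g + (G - Q.firstᵀ *ᵥ (Q.first *ᵥ G)))) =
      Q.first *ᵥ b + g := by
    simp only [mulVec_add, mulVec_sub, mulVec_mulVec, ← Matrix.mul_assoc, hQ.first_mul_transpose,
      one_mulVec, Matrix.one_mul, sub_self, add_zero]
  rw [resp_eq_vecCons, hfirst]
  congr 1
  refine resp_congr _ fun j h => ?_
  simp only [mulVec_add, mulVec_sub, mulVec_mulVec, ← Matrix.mul_assoc,
    hQ.tail_mul_first_transpose (Q.first *ᵥ b + g) j h, zero_mulVec, Matrix.zero_mul, sub_zero,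
    zero_add]

lemma measurable_resp {X : Type*} [MeasurableSpace X] {Q : X → QueryMaps N k t}
    (hQ : ∀ (j : Fin t) (i : Fin k) (l : Fin N),
      Measurable fun p : X × (Fin (j : ℕ) → Fin k → ℝ) => Q p.1 j p.2 i l)
    {a : X → Fin N → ℝ} (ha : Measurable a) : Measurable fun x => resp (Q x) (a x) := by
  refine measurable_pi_lambda _ fun ⟨j, hj⟩ => ?_
  induction j using Nat.strong_induction_on with
  | _ j ih =>
    have hhist : Measurable fun x => fun i : Fin j => resp (Q x) (a x) ⟨i.1, i.isLt.trans hj⟩ :=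
      measurable_pi_lambda _ fun i => ih i i.isLt _
    refine measurable_pi_lambda _ fun i => ?_
    simp only [resp.eq_1 (Q _) (a _) ⟨j, hj⟩, mulVec, dotProduct]
    exact Finset.measurable_sum _ fun l _ =>
      ((hQ ⟨j, hj⟩ i l).comp (measurable_id.prodMk hhist)).mul ((measurable_pi_apply l).comp ha)

lemma Valid.measurable_resp_add {Q : QueryMaps N k t} (hQ : Q.Valid) (b : Fin N → ℝ) :
    Measurable fun G => resp Q (b + G) :=
  measurable_resp (Q := fun _ => Q) (fun j i l => (hQ.1 j i l).comp measurable_snd)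
    (measurable_const_add b)

lemma Valid.measurable_resp_tail {Q : QueryMaps N k (t + 1)} (hQ : Q.Valid) (b : Fin N → ℝ) :
    Measurable fun p : (Fin k → ℝ) × (Fin N → ℝ) =>
      vecCons p.1 (resp (Q.tail p.1) (b + p.2)) :=
  measurable_vecCons measurable_fst <| measurable_resp (Q := fun p => Q.tail p.1)
    (fun j i l => (hQ.1 j.succ i l).comp
      (measurable_vecCons (measurable_fst.comp measurable_fst) measurable_snd))
    (measurable_snd.const_add b)

/-- Expectation of the test `f` of the transcript when the input is Gaussian with mean `b`. -/
def gaussianMean (Q : QueryMaps N k t) (b : Fin N → ℝ) (f : (Fin t → Fin k → ℝ) → ℝ) : ℝ :=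
  ∫ G, f (resp Q (b + G)) ∂stdGaussian (Fin N)

lemma gaussianMean_mem_Icc (Q : QueryMaps N k t) (b : Fin N → ℝ)
    {f : (Fin t → Fin k → ℝ) → ℝ} (h01 : ∀ r, f r ∈ Set.Icc 0 1) :
    Q.gaussianMean b f ∈ Set.Icc 0 1 := by
  refine ⟨integral_nonneg fun G => (h01 _).1, ?_⟩
  calc Q.gaussianMean b f ≤ ∫ _, 1 ∂stdGaussian (Fin N) :=
        integral_mono_of_nonneg (.of_forall fun G => (h01 _).1) (integrable_const _)
          (.of_forall fun G => (h01 _).2)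
    _ = 1 := by simp

lemma gaussianMean_zero (Q : QueryMaps N k 0) (b : Fin N → ℝ) (f : (Fin 0 → Fin k → ℝ) → ℝ) :
    Q.gaussianMean b f = f ![] := by
  have hf (r : Fin 0 → Fin k → ℝ) : f r = f ![] := congrArg f (Subsingleton.elim _ _)
  simp only [gaussianMean, hf (resp Q _), integral_const, probReal_univ, one_smul]

lemma Valid.measurable_gaussianMean_tail {Q : QueryMaps N k (t + 1)} (hQ : Q.Valid)
    (b : Fin N → ℝ) {f : (Fin (t + 1) → Fin k → ℝ) → ℝ} (hf : Measurable f) :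
    Measurable fun g => (Q.tail g).gaussianMean b fun r => f (vecCons g r) :=
  ((hf.comp (hQ.measurable_resp_tail b)).stronglyMeasurable.integral_prod_right').measurable

/-- The first response is Gaussian with mean `first *ᵥ b`, and given that response the remaining
rounds run on a fresh Gaussian input. -/
lemma Valid.gaussianMean_succ {Q : QueryMaps N k (t + 1)} (hQ : Q.Valid) (b : Fin N → ℝ)
    {f : (Fin (t + 1) → Fin k → ℝ) → ℝ} (hf : Measurable f) (h01 : ∀ r, f r ∈ Set.Icc 0 1) :
    Q.gaussianMean b f = ∫ g, gaussianLik (Q.first *ᵥ b) g *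
      (Q.tail g).gaussianMean b (fun r => f (vecCons g r)) ∂stdGaussian (Fin k) := by
  have hmeas : Measurable fun p : (Fin k → ℝ) × (Fin N → ℝ) =>
      f (vecCons (Q.first *ᵥ b + p.1) (resp (Q.tail (Q.first *ᵥ b + p.1)) (b + p.2))) :=
    (hf.comp (hQ.measurable_resp_tail b)).comp
      ((measurable_fst.const_add (Q.first *ᵥ b)).prodMk measurable_snd)
  rw [← integral_add_stdGaussian _ (hQ.measurable_gaussianMean_tail b hf), gaussianMean,
    ← map_transpose_mulVec_add_stdGaussian Q.first hQ.first_mul_transpose,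
    integral_map (f := fun G => f (resp Q (b + G)))
      (Continuous.measurable (by fun_prop)).aemeasurable
      (hf.comp (hQ.measurable_resp_add b)).aestronglyMeasurable]
  simp_rw [hQ.resp_add b]
  exact integral_prod _ (integrable_of_mem_Icc hmeas fun _ => h01 _)

end QueryMaps

/-! ### Information growth along the rounds -/

lemma integrable_expect {Θ X : Type*} [Fintype Θ] [MeasurableSpace X] {μ : Measure X}
    {f : Θ → X → ℝ} (hf : ∀ θ, Integrable (f θ) μ) : Integrable (fun x => 𝔼 θ, f θ x) μ := by
  simp only [Fintype.expect_eq_sum_div_card]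
  exact (integrable_finsetSum _ fun θ _ => hf θ).div_const _

lemma integral_expect {Θ X : Type*} [Fintype Θ] [MeasurableSpace X] {μ : Measure X}
    {f : Θ → X → ℝ} (hf : ∀ θ, Integrable (f θ) μ) :
    ∫ x, 𝔼 θ, f θ x ∂μ = 𝔼 θ, ∫ x, f θ x ∂μ := by
  simp only [Fintype.expect_eq_sum_div_card]
  rw [integral_div, integral_finsetSum _ fun θ _ => hf θ]

section Posterior

variable {Θ ι : Type*} [Fintype ι]

/-- Unnormalised posterior weight of the parameter after observing `g` with Gaussian law of mean
`m θ`, the prior weight being `w`. -/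
def posteriorWeight (w : Θ → ℝ) (m : Θ → ι → ℝ) (g : ι → ℝ) (θ : Θ) : ℝ := w θ * gaussianLik (m θ) g

variable {w : Θ → ℝ}

lemma posteriorWeight_pos (hw : ∀ θ, 0 < w θ) (m : Θ → ι → ℝ) (g : ι → ℝ) (θ : Θ) :
    0 < posteriorWeight w m g θ :=
  mul_pos (hw θ) (gaussianLik_pos _ _)

lemma continuous_posteriorWeight (m : Θ → ι → ℝ) : Continuous (posteriorWeight w m) :=
  continuous_pi fun θ => (continuous_gaussianLik (m θ)).const_mul (w θ)

variable [Fintype Θ]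

lemma integrable_expect_posteriorWeight (m : Θ → ι → ℝ) :
    Integrable (fun g => 𝔼 θ, posteriorWeight w m g θ) (stdGaussian ι) :=
  integrable_expect fun θ => (integrable_gaussianLik (m θ)).const_mul (w θ)

lemma integral_expect_posteriorWeight (m : Θ → ι → ℝ) :
    ∫ g, 𝔼 θ, posteriorWeight w m g θ ∂stdGaussian ι = 𝔼 θ, w θ := by
  simp only [posteriorWeight]
  rw [integral_expect fun θ => (integrable_gaussianLik (m θ)).const_mul (w θ)]
  simp only [integral_const_mul, integral_gaussianLik, mul_one]

/-- Constant term of `log (posteriorWeight w m g θ) - log (𝔼 w)`, which is an affine function of `g`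
with linear part `m θ`. -/
def posteriorLogConst (w : Θ → ℝ) (m : Θ → ι → ℝ) (θ : Θ) : ℝ :=
  Real.log (w θ) - sqNorm (m θ) / 2 - Real.log (𝔼 θ, w θ)

lemma integrable_affine_posteriorWeight (m : Θ → ι → ℝ) (c : Θ → ℝ) :
    Integrable (fun g => (𝔼 θ, w θ * (gaussianLik (m θ) g * (m θ ⬝ᵥ g + c θ)))
      - 𝔼 θ, posteriorWeight w m g θ + 𝔼 θ, w θ) (stdGaussian ι) :=
  ((integrable_expect fun θ => (integrable_gaussianLik_mul_affine (m θ) (c θ)).const_mul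
    (w θ)).sub (integrable_expect_posteriorWeight m)).add (integrable_const _)

variable [Nonempty Θ]

/-- The tangent line bound at the prior mass makes the posterior entropy integrable in closed
form. -/
lemma ent_posteriorWeight_le (hw : ∀ θ, 0 < w θ) (m : Θ → ι → ℝ) (g : ι → ℝ) :
    ent (posteriorWeight w m g) ≤
      (𝔼 θ, w θ * (gaussianLik (m θ) g * (m θ ⬝ᵥ g + posteriorLogConst w m θ)))
        - 𝔼 θ, posteriorWeight w m g θ + 𝔼 θ, w θ := by
  have hlog (θ : Θ) : Real.log (posteriorWeight w m g θ) - Real.log (𝔼 θ, w θ) =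
      m θ ⬝ᵥ g + posteriorLogConst w m θ := by
    rw [posteriorWeight, Real.log_mul (hw θ).ne' (gaussianLik_pos _ _).ne', gaussianLik,
      Real.log_exp, posteriorLogConst]
    ring
  have hent := ent_le_expect_sub_add (posteriorWeight_pos hw m g) (expect_pos_of_pos hw)
  simp only [hlog] at hent
  simpa only [posteriorWeight, mul_assoc] using hent

lemma integrable_ent_posteriorWeight (hw : ∀ θ, 0 < w θ) (m : Θ → ι → ℝ) :
    Integrable (fun g => ent (posteriorWeight w m g)) (stdGaussian ι) := by
  refine (integrable_affine_posteriorWeight (w := w) m (posteriorLogConst w m)).mono'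
    (continuous_ent.comp (continuous_posteriorWeight m)).aestronglyMeasurable
    (.of_forall fun g => ?_)
  rw [Real.norm_of_nonneg (ent_nonneg (posteriorWeight_pos hw m g))]
  exact ent_posteriorWeight_le hw m g

lemma integral_ent_posteriorWeight_le (hw : ∀ θ, 0 < w θ) (m : Θ → ι → ℝ) :
    ∫ g, ent (posteriorWeight w m g) ∂stdGaussian ι ≤ ent w + 𝔼 θ, w θ * (sqNorm (m θ) / 2) := by
  have hint (θ : Θ) := (integrable_gaussianLik_mul_affine (m θ) (posteriorLogConst w m θ)).const_mul
    (w θ)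
  have hsub : Integrable (fun g =>
      (𝔼 θ, w θ * (gaussianLik (m θ) g * (m θ ⬝ᵥ g + posteriorLogConst w m θ)))
        - 𝔼 θ, posteriorWeight w m g θ) (stdGaussian ι) :=
    (integrable_expect hint).sub (integrable_expect_posteriorWeight m)
  refine (integral_mono (integrable_ent_posteriorWeight hw m)
    (integrable_affine_posteriorWeight m (posteriorLogConst w m))
    (ent_posteriorWeight_le hw m)).trans_eq ?_
  rw [integral_add hsub (integrable_const _),
    integral_sub (integrable_expect hint) (integrable_expect_posteriorWeight m),
    integral_expect_posteriorWeight, integral_expect hint]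
  simp only [integral_const_mul, integral_gaussianLik_mul_affine, integral_const, probReal_univ,
    one_smul, sub_add_cancel]
  rw [ent, Finset.expect_mul, ← Finset.expect_sub_distrib, ← Finset.expect_add_distrib]
  refine Finset.expect_congr rfl fun θ _ => ?_
  rw [posteriorLogConst]
  ring

end Posterior

section Rounds

variable {N k : ℕ} {Θ : Type*} [Fintype Θ] [Nonempty Θ] {a : Θ → Fin N → ℝ} {ρ A B : ℝ}

lemma expect_gaussianMean_succ_le {t : ℕ} {Q : QueryMaps N k (t + 1)} (hQ : Q.Valid) (hA : 0 ≤ A)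
    {f : Θ → (Fin (t + 1) → Fin k → ℝ) → ℝ} (hf : ∀ θ, Measurable (f θ))
    (h01 : ∀ θ r, f θ r ∈ Set.Icc 0 1) {w : Θ → ℝ} (hw : ∀ θ, 0 < w θ)
    (htail : ∀ g w, (∀ θ, 0 < w θ) →
      𝔼 θ, w θ * (Q.tail g).gaussianMean (a θ) (fun r => f θ (vecCons g r)) ≤
        A * (ent w + ρ * 𝔼 θ, w θ) + B * 𝔼 θ, w θ) :
    𝔼 θ, w θ * Q.gaussianMean (a θ) (f θ) ≤
      A * (ent w + 𝔼 θ, w θ * (sqNorm (Q.first *ᵥ a θ) / 2) + ρ * 𝔼 θ, w θ) + B * 𝔼 θ, w θ := by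
  set m : Θ → Fin k → ℝ := fun θ => Q.first *ᵥ a θ with hm
  set Φ : Θ → (Fin k → ℝ) → ℝ := fun θ g =>
    (Q.tail g).gaussianMean (a θ) (fun r => f θ (vecCons g r)) with hΦ
  have hΦ01 (θ : Θ) (g : Fin k → ℝ) : Φ θ g ∈ Set.Icc 0 1 :=
    QueryMaps.gaussianMean_mem_Icc _ _ fun r => h01 θ _
  have hΦmeas (θ : Θ) : Measurable (Φ θ) := hQ.measurable_gaussianMean_tail (a θ) (hf θ)
  have hint (θ : Θ) :
      Integrable (fun g => w θ * (gaussianLik (m θ) g * Φ θ g)) (stdGaussian (Fin k)) :=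
    (integrable_gaussianLik_mul (m θ) (hΦmeas θ) (integrable_of_mem_Icc
      ((hΦmeas θ).comp (measurable_const_add _)) fun _ => hΦ01 θ _)).const_mul _
  have hent := integrable_ent_posteriorWeight hw m
  have hmass := integrable_expect_posteriorWeight (w := w) m
  have hpot : Integrable (fun g => A * (ent (posteriorWeight w m g)
      + ρ * 𝔼 θ, posteriorWeight w m g θ)) (stdGaussian (Fin k)) :=
    (hent.add (hmass.const_mul ρ)).const_mul A
  calc 𝔼 θ, w θ * Q.gaussianMean (a θ) (f θ)
      = ∫ g, 𝔼 θ, w θ * (gaussianLik (m θ) g * Φ θ g) ∂stdGaussian (Fin k) := by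
        rw [integral_expect hint]
        simp only [integral_const_mul, hQ.gaussianMean_succ _ (hf _) (h01 _), hm, hΦ]
    _ ≤ ∫ g, A * (ent (posteriorWeight w m g) + ρ * 𝔼 θ, posteriorWeight w m g θ)
          + B * 𝔼 θ, posteriorWeight w m g θ ∂stdGaussian (Fin k) := by
        refine integral_mono (integrable_expect hint) (hpot.add (hmass.const_mul B)) fun g => ?_
        simpa only [posteriorWeight, mul_assoc] using htail g _ (posteriorWeight_pos hw m g)
    _ = A * (∫ g, ent (posteriorWeight w m g) ∂stdGaussian (Fin k) + ρ * 𝔼 θ, w θ)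
          + B * 𝔼 θ, w θ := by
        rw [integral_add hpot (hmass.const_mul B),
          integral_const_mul, integral_add hent (hmass.const_mul ρ), integral_const_mul,
          integral_const_mul, integral_expect_posteriorWeight]
    _ ≤ _ := by
        gcongr
        exact integral_ent_posteriorWeight_le hw m

/-- The potential `ent w + ρ 𝔼 w` of the posterior grows by a factor at most `1 + κ` per round. -/
theorem expect_gaussianMean_le {κ : ℝ} (hκ : 0 ≤ κ) (hA : 0 ≤ A)
    (henergy : ∀ M : Matrix (Fin k) (Fin N) ℝ, M * Mᵀ = 1 → ∀ w : Θ → ℝ, (∀ θ, 0 < w θ) →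
      𝔼 θ, w θ * (sqNorm (M *ᵥ a θ) / 2) ≤ κ * (ent w + ρ * 𝔼 θ, w θ))
    {t : ℕ} {Q : QueryMaps N k t} (hQ : Q.Valid) {f : Θ → (Fin t → Fin k → ℝ) → ℝ}
    (hf : ∀ θ, Measurable (f θ)) (h01 : ∀ θ r, f θ r ∈ Set.Icc 0 1)
    (hbase : ∀ r (w : Θ → ℝ), (∀ θ, 0 < w θ) →
      𝔼 θ, w θ * f θ r ≤ A * (ent w + ρ * 𝔼 θ, w θ) + B * 𝔼 θ, w θ)
    {w : Θ → ℝ} (hw : ∀ θ, 0 < w θ) :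
    𝔼 θ, w θ * Q.gaussianMean (a θ) (f θ) ≤
      A * (1 + κ) ^ t * (ent w + ρ * 𝔼 θ, w θ) + B * 𝔼 θ, w θ := by
  induction t generalizing w with
  | zero => simpa only [QueryMaps.gaussianMean_zero, pow_zero, mul_one] using hbase ![] w hw
  | succ t ih =>
    have htail (g : Fin k → ℝ) (w : Θ → ℝ) (hw : ∀ θ, 0 < w θ) :=
      ih (hQ.tail g) (fun θ => (hf θ).comp (measurable_vecCons measurable_const measurable_id))
        (fun θ r => h01 θ (vecCons g r)) (fun r w hw => hbase (vecCons g r) w hw) hw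
    calc 𝔼 θ, w θ * Q.gaussianMean (a θ) (f θ)
        ≤ A * (1 + κ) ^ t * (ent w + 𝔼 θ, w θ * (sqNorm (Q.first *ᵥ a θ) / 2) + ρ * 𝔼 θ, w θ)
            + B * 𝔼 θ, w θ :=
          expect_gaussianMean_succ_le hQ (by positivity) hf h01 hw htail
      _ ≤ A * (1 + κ) ^ t * (ent w + κ * (ent w + ρ * 𝔼 θ, w θ) + ρ * 𝔼 θ, w θ)
            + B * 𝔼 θ, w θ := by
          gcongr
          exact henergy _ hQ.first_mul_transpose w hw
      _ = A * (1 + κ) ^ (t + 1) * (ent w + ρ * 𝔼 θ, w θ) + B * 𝔼 θ, w θ := by ring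

end Rounds

/-! ### Order-two chaos -/

section MatrixNorms

open scoped Matrix.Norms.L2Operator

variable {ι κ : Type*} [Fintype ι] [Fintype κ]

lemma norm_toLp_sq (x : ι → ℝ) : ‖WithLp.toLp 2 x‖ ^ 2 = sqNorm x :=
  EuclideanSpace.real_norm_sq_eq _

lemma sqNorm_mulVec_le [DecidableEq κ] (A : Matrix ι κ ℝ) (x : κ → ℝ) :
    sqNorm (A *ᵥ x) ≤ ‖A‖ ^ 2 * sqNorm x := by
  rw [← norm_toLp_sq, ← norm_toLp_sq, ← mul_pow]
  exact pow_le_pow_left₀ (norm_nonneg _) (l2_opNorm_mulVec A (WithLp.toLp 2 x)) 2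

lemma l2_opNorm_sq_le [DecidableEq κ] {A : Matrix ι κ ℝ} {s : ℝ} (hs : 0 ≤ s)
    (h : ∀ x, sqNorm (A *ᵥ x) ≤ s * sqNorm x) : ‖A‖ ^ 2 ≤ s := by
  have hA : ‖A‖ ≤ √s := by
    rw [l2_opNorm_def]
    refine ContinuousLinearMap.opNorm_le_bound _ (Real.sqrt_nonneg s) fun x => ?_
    refine le_of_sq_le_sq ?_ (by positivity)
    rw [mul_pow, Real.sq_sqrt hs, EuclideanSpace.real_norm_sq_eq, EuclideanSpace.real_norm_sq_eq]
    exact h x.ofLp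
  exact (pow_le_pow_left₀ (norm_nonneg _) hA 2).trans_eq (Real.sq_sqrt hs)

lemma l2_opNorm_transpose [DecidableEq ι] [DecidableEq κ] (A : Matrix ι κ ℝ) : ‖Aᵀ‖ = ‖A‖ := by
  rw [← conjTranspose_eq_transpose_of_trivial, l2_opNorm_conjTranspose]

lemma frobSq_eq_trace (A : Matrix ι κ ℝ) : frobSq A = (Aᵀ * A).trace := by
  rw [frobSq, Finset.sum_comm]
  simp only [trace, diag, mul_apply, transpose_apply, sq]

lemma frobSq_transpose (A : Matrix ι κ ℝ) : frobSq Aᵀ = frobSq A := by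
  simp only [frobSq, transpose_apply]
  exact Finset.sum_comm

lemma frobSq_smul (c : ℝ) (A : Matrix ι κ ℝ) : frobSq (c • A) = c ^ 2 * frobSq A := by
  simp only [frobSq, Matrix.smul_apply, smul_eq_mul, mul_pow, Finset.mul_sum]

lemma sqNorm_mulVec_of_transpose_mul_self [DecidableEq κ] {A : Matrix ι κ ℝ} (hA : Aᵀ * A = 1)
    (x : κ → ℝ) : sqNorm (A *ᵥ x) = sqNorm x := by
  rw [sqNorm_eq_dotProduct, dotProduct_mulVec, ← mulVec_transpose, mulVec_mulVec, hA, one_mulVec,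
    sqNorm_eq_dotProduct]

lemma exists_orthogonal_diagonalization [DecidableEq κ] (M : Matrix ι κ ℝ) :
    ∃ (U : Matrix κ κ ℝ) (d : κ → ℝ), U * Uᵀ = 1 ∧ (∀ i, d i ∈ Set.Icc 0 (‖M‖ ^ 2)) ∧
      ∑ i, d i = frobSq M ∧ ∀ x, sqNorm (M *ᵥ x) = ∑ i, d i * (U *ᵥ x) i ^ 2 := by
  have hM : (Mᵀ * M).IsHermitian := by
    simpa only [conjTranspose_eq_transpose_of_trivial] using isHermitian_conjTranspose_mul_self M
  set V : Matrix κ κ ℝ := ↑hM.eigenvectorUnitary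
  set d := hM.eigenvalues
  have hVV : Vᵀ * V = 1 := by
    simpa only [star_eq_conjTranspose, conjTranspose_eq_transpose_of_trivial] using
      UnitaryGroup.star_mul_self hM.eigenvectorUnitary
  have hspec : Mᵀ * M = V * diagonal d * Vᵀ := by
    simpa only [Unitary.conjStarAlgAut_apply, star_eq_conjTranspose,
      conjTranspose_eq_transpose_of_trivial] using! hM.spectral_theorem
  have hquad (x : κ → ℝ) : sqNorm (M *ᵥ x) = ∑ i, d i * (Vᵀ *ᵥ x) i ^ 2 := by
    rw [sqNorm_eq_dotProduct, dotProduct_mulVec, ← mulVec_transpose, mulVec_mulVec, hspec,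
      dotProduct_comm, ← mulVec_mulVec, ← mulVec_mulVec, dotProduct_mulVec, ← mulVec_transpose,
      dotProduct]
    simp only [mulVec_diagonal]
    exact Finset.sum_congr rfl fun i _ => by ring
  have hd (i : κ) : d i = sqNorm (M *ᵥ (V *ᵥ Pi.single i 1)) := by
    rw [hquad, mulVec_mulVec, hVV, one_mulVec]
    simp [Pi.single_apply]
  refine ⟨Vᵀ, d, by rwa [transpose_transpose], fun i => ⟨?_, ?_⟩, ?_, hquad⟩
  · rw [hd]
    exact sqNorm_nonneg _
  · have hunit : sqNorm (V *ᵥ Pi.single i 1) = 1 := by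
      rw [sqNorm_mulVec_of_transpose_mul_self hVV]
      simp [sqNorm, Pi.single_apply]
    simpa only [← hd, hunit, mul_one] using sqNorm_mulVec_le M (V *ᵥ Pi.single i 1)
  · rw [frobSq_eq_trace, hspec, trace_mul_comm, ← Matrix.mul_assoc, hVV, Matrix.one_mul,
      trace_diagonal]

end MatrixNorms

section Chaos

open scoped Matrix.Norms.L2Operator

lemma gaussianPDFReal_mul_exp_sq (c x : ℝ) :
    gaussianPDFReal 0 1 x * Real.exp (c * x ^ 2) =
      (√(2 * Real.pi))⁻¹ * Real.exp (-(1 / 2 - c) * x ^ 2) := by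
  rw [gaussianPDFReal, mul_assoc, ← Real.exp_add]
  simp only [NNReal.coe_one, mul_one, sub_zero]
  ring_nf

lemma integrable_exp_sq_gaussianReal {c : ℝ} (hc : c < 1 / 2) :
    Integrable (fun x => Real.exp (c * x ^ 2)) (gaussianReal 0 1) := by
  rw [gaussianReal_of_var_ne_zero _ one_ne_zero, integrable_withDensity_iff
    (measurable_gaussianPDF _ _) (.of_forall fun _ => gaussianPDF_lt_top)]
  simp only [toReal_gaussianPDF, mul_comm (Real.exp _), gaussianPDFReal_mul_exp_sq]
  exact (integrable_exp_neg_mul_sq (sub_pos.2 hc)).const_mul _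

lemma integral_exp_sq_gaussianReal_le {c : ℝ} (hc0 : 0 ≤ c) (hc : c ≤ 1 / 4) :
    ∫ x, Real.exp (c * x ^ 2) ∂gaussianReal 0 1 ≤ Real.exp (2 * c) := by
  have hden : 0 < 1 - 2 * c := by linarith
  have hinv : (2 * Real.pi)⁻¹ * (Real.pi / (1 / 2 - c)) = 1 / (1 - 2 * c) := by
    have := Real.pi_pos.ne'
    have : 1 / 2 - c ≠ 0 := by linarith
    field_simp
  calc ∫ x, Real.exp (c * x ^ 2) ∂gaussianReal 0 1 = √(1 / (1 - 2 * c)) := by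
        rw [integral_gaussianReal_eq_integral_smul one_ne_zero]
        simp only [smul_eq_mul, gaussianPDFReal_mul_exp_sq]
        rw [integral_const_mul, integral_gaussian, ← Real.sqrt_inv,
          ← Real.sqrt_mul (by positivity), hinv]
    _ ≤ Real.exp (2 * c) := by
        rw [Real.sqrt_le_left (Real.exp_pos _).le, ← Real.exp_nat_mul, div_le_iff₀ hden]
        have hexp := Real.add_one_le_exp (((2 : ℕ) : ℝ) * (2 * c))
        push_cast at hexp ⊢
        nlinarith

variable {κ : Type*}

/-- The sign vector in `{±1}^κ` coded by a Boolean vector, the Boolean cube serving as the finite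
probability space of a Rademacher vector. -/
def signVec (b : κ → Bool) : κ → ℝ := fun i => if b i then 1 else -1

lemma signVec_sq (b : κ → Bool) (i : κ) : signVec b i ^ 2 = 1 := by
  unfold signVec
  split <;> norm_num

variable [Fintype κ]

lemma exp_dotProduct_eq_mul_gaussianLik (x g : κ → ℝ) :
    Real.exp (x ⬝ᵥ g) = Real.exp (sqNorm x / 2) * gaussianLik x g := by
  rw [gaussianLik, ← Real.exp_add, add_sub_cancel]

lemma integrable_exp_dotProduct_stdGaussian (x : κ → ℝ) :
    Integrable (fun g => Real.exp (x ⬝ᵥ g)) (stdGaussian κ) := by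
  simp only [exp_dotProduct_eq_mul_gaussianLik]
  exact (integrable_gaussianLik x).const_mul _

lemma integral_exp_dotProduct_stdGaussian (x : κ → ℝ) :
    ∫ g, Real.exp (x ⬝ᵥ g) ∂stdGaussian κ = Real.exp (sqNorm x / 2) := by
  simp only [exp_dotProduct_eq_mul_gaussianLik]
  rw [integral_const_mul, integral_gaussianLik, mul_one]

lemma sqNorm_signVec (b : κ → Bool) : sqNorm (signVec b) = Fintype.card κ := by
  simp only [sqNorm, signVec_sq, Finset.sum_const, Finset.card_univ, nsmul_eq_mul, mul_one]

lemma expect_exp_dotProduct_signVec_le [DecidableEq κ] (x : κ → ℝ) :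
    𝔼 b : κ → Bool, Real.exp (x ⬝ᵥ signVec b) ≤ Real.exp (sqNorm x / 2) := by
  have hprod : ∑ b : κ → Bool, Real.exp (x ⬝ᵥ signVec b) = ∏ i, 2 * Real.cosh (x i) := by
    calc ∑ b : κ → Bool, Real.exp (x ⬝ᵥ signVec b)
        = ∏ i, ∑ c : Bool, Real.exp (x i * if c then 1 else -1) := by
          simp only [Finset.prod_univ_sum, Fintype.piFinset_univ, dotProduct, Real.exp_sum, signVec]
      _ = ∏ i, 2 * Real.cosh (x i) := by
          refine Finset.prod_congr rfl fun i _ => ?_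
          rw [Real.cosh_eq, mul_div_cancel₀ _ two_ne_zero, Fintype.sum_bool]
          simp
  rw [Fintype.expect_eq_sum_div_card, hprod, Finset.prod_mul_distrib]
  simp only [Finset.prod_const, Fintype.card_fun, Fintype.card_bool, Finset.card_univ,
    Nat.cast_pow, Nat.cast_ofNat]
  rw [mul_div_cancel_left₀ _ (by positivity), sqNorm, Finset.sum_div, Real.exp_sum]
  exact Finset.prod_le_prod (fun i _ => (Real.cosh_pos _).le)
    fun i _ => Real.cosh_le_exp_half_sq (x i)

variable {ι : Type*} [Fintype ι] [DecidableEq κ]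

lemma gaussian_chaos (M : Matrix ι κ ℝ) {l : ℝ} (hl : 0 ≤ l) (hM : l * ‖M‖ ^ 2 ≤ 1 / 4) :
    Integrable (fun g => Real.exp (l * sqNorm (M *ᵥ g))) (stdGaussian κ) ∧
      ∫ g, Real.exp (l * sqNorm (M *ᵥ g)) ∂stdGaussian κ ≤ Real.exp (2 * l * frobSq M) := by
  obtain ⟨U, d, hU, hd, hsum, hquad⟩ := exists_orthogonal_diagonalization M
  have hld (i : κ) : 0 ≤ l * d i ∧ l * d i ≤ 1 / 4 :=
    ⟨mul_nonneg hl (hd i).1, (mul_le_mul_of_nonneg_left (hd i).2 hl).trans hM⟩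
  set F : (κ → ℝ) → ℝ := fun y => ∏ i, Real.exp (l * d i * y i ^ 2)
  have hF (g : κ → ℝ) : Real.exp (l * sqNorm (M *ᵥ g)) = F (U *ᵥ g) := by
    simp only [F, ← Real.exp_sum, hquad, Finset.mul_sum, mul_assoc]
  have hFcont : Continuous F := by fun_prop
  have hFint : Integrable F (stdGaussian κ) := Integrable.fintype_prod
    (f := fun i x => Real.exp (l * d i * x ^ 2))
    fun i => integrable_exp_sq_gaussianReal (by linarith [(hld i).2])
  have hmap := map_mulVec_stdGaussian U hU
  simp only [hF]
  refine ⟨?_, ?_⟩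
  · rw [← hmap] at hFint
    exact hFint.comp_measurable (by fun_prop)
  · rw [← integral_map (φ := (U *ᵥ ·)) (f := F) (by fun_prop) hFcont.aestronglyMeasurable, hmap,
      _root_.stdGaussian,
      integral_fintype_prod_eq_prod (f := fun i x => Real.exp (l * d i * x ^ 2)), ← hsum,
      Finset.mul_sum, Real.exp_sum]
    refine Finset.prod_le_prod (fun i _ => integral_nonneg fun x => (Real.exp_pos _).le)
      fun i _ => ?_
    simpa only [mul_assoc] using integral_exp_sq_gaussianReal_le (hld i).1 (hld i).2

/-- An auxiliary Gaussian vector linearises the square (Hubbard–Stratonovich), which decouples the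
signs and leaves a Gaussian chaos of the transposed matrix. -/
lemma expect_exp_sqNorm_mulVec_signVec_le (M : Matrix ι κ ℝ) {l : ℝ} (hl : 0 ≤ l)
    (hM : l * ‖M‖ ^ 2 ≤ 1 / 4) :
    𝔼 b, Real.exp (l * sqNorm (M *ᵥ signVec b)) ≤ Real.exp (2 * l * frobSq M) := by
  have hscale (x : κ → ℝ) : l * sqNorm (M *ᵥ x) = sqNorm (√(2 * l) • (M *ᵥ x)) / 2 := by
    rw [sqNorm_smul, Real.sq_sqrt (by positivity)]
    ring
  have hdual (g : ι → ℝ) (x : κ → ℝ) :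
      (√(2 * l) • (M *ᵥ x)) ⬝ᵥ g = (√(2 * l) • (Mᵀ *ᵥ g)) ⬝ᵥ x := by
    rw [smul_dotProduct, smul_dotProduct, mulVec_transpose, ← dotProduct_mulVec, dotProduct_comm]
  obtain ⟨hint, hle⟩ := gaussian_chaos Mᵀ hl (by rwa [l2_opNorm_transpose])
  calc 𝔼 b, Real.exp (l * sqNorm (M *ᵥ signVec b))
      = ∫ g, 𝔼 b, Real.exp ((√(2 * l) • (M *ᵥ signVec b)) ⬝ᵥ g) ∂stdGaussian ι := by
        rw [integral_expect fun b => integrable_exp_dotProduct_stdGaussian _]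
        simp only [hscale, integral_exp_dotProduct_stdGaussian]
    _ ≤ ∫ g, Real.exp (l * sqNorm (Mᵀ *ᵥ g)) ∂stdGaussian ι := by
        refine integral_mono
          (integrable_expect fun b => integrable_exp_dotProduct_stdGaussian _) hint fun g => ?_
        simp only [hdual]
        refine (expect_exp_dotProduct_signVec_le _).trans_eq ?_
        rw [sqNorm_smul, Real.sq_sqrt (by positivity)]
        ring_nf
    _ ≤ Real.exp (2 * l * frobSq M) := by rwa [frobSq_transpose] at hle

end Chaos

/-! ### Energy captured by one round of queries -/

section QueryEnergy

open scoped Matrix.Norms.L2Operator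

lemma frobSq_of_mul_transpose_self {ι κ : Type*} [Fintype ι] [Fintype κ] [DecidableEq κ]
    {M : Matrix κ ι ℝ} (hM : M * Mᵀ = 1) : frobSq M = Fintype.card κ := by
  rw [← frobSq_transpose, frobSq_eq_trace, transpose_transpose, hM, trace_one]

lemma frobSq_le_card_mul_l2_opNorm_sq {ι κ : Type*} [Fintype ι] [Fintype κ] [DecidableEq κ]
    (A : Matrix ι κ ℝ) : frobSq A ≤ Fintype.card κ * ‖A‖ ^ 2 := by
  have hcol (j : κ) : ∑ i, A i j ^ 2 ≤ ‖A‖ ^ 2 := by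
    simpa [sqNorm, Pi.single_apply] using sqNorm_mulVec_le A (Pi.single j 1)
  rw [frobSq, Finset.sum_comm]
  simpa using Finset.sum_le_sum fun j (_ : j ∈ Finset.univ) => hcol j

variable {n : ℕ}

lemma sum_finProdFinEquiv {m : ℕ} (f : Fin (n * m) → ℝ) :
    ∑ i, f i = ∑ a, ∑ b, f (finProdFinEquiv (a, b)) := by
  rw [← Equiv.sum_comp finProdFinEquiv f, Fintype.sum_prod_type]

lemma vec_finProdFinEquiv (A : Matrix (Fin n) (Fin n) ℝ) (a b : Fin n) :
    _root_.vec n A (finProdFinEquiv (a, b)) = A a b := by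
  simp only [_root_.vec, Equiv.symm_apply_apply]

lemma sqNorm_vec (A : Matrix (Fin n) (Fin n) ℝ) : sqNorm (_root_.vec n A) = frobSq A := by
  simp only [sqNorm, sum_finProdFinEquiv, vec_finProdFinEquiv, frobSq]

lemma frobSq_vecMulVec {ι κ : Type*} [Fintype ι] [Fintype κ] (u : ι → ℝ) (v : κ → ℝ) :
    frobSq (vecMulVec u v) = sqNorm u * sqNorm v := by
  simp only [frobSq, vecMulVec_apply, mul_pow, sqNorm, Finset.sum_mul_sum]

variable {κ : Type*}

/-- The matrix of linear functionals on `n × n` matrices, regrouped so that it acts on the left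
tensor factor. -/
def leftReshape (M : Matrix κ (Fin (n * n)) ℝ) : Matrix (κ × Fin n) (Fin n) ℝ :=
  .of fun p a => M p.1 (finProdFinEquiv (a, p.2))

/-- The functionals on the right tensor factor left after fixing the left factor to `u`. -/
def leftContract (M : Matrix κ (Fin (n * n)) ℝ) (u : Fin n → ℝ) : Matrix κ (Fin n) ℝ :=
  .of fun i b => (leftReshape M *ᵥ u) (i, b)

lemma leftContract_mulVec (M : Matrix κ (Fin (n * n)) ℝ) (u v : Fin n → ℝ) :
    leftContract M u *ᵥ v = M *ᵥ _root_.vec n (vecMulVec u v) := by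
  ext i
  simp only [leftContract, leftReshape, mulVec, dotProduct, of_apply, sum_finProdFinEquiv,
    vec_finProdFinEquiv, vecMulVec_apply, Finset.sum_mul, mul_assoc]
  exact Finset.sum_comm

variable [Fintype κ]

lemma sqNorm_leftReshape_mulVec (M : Matrix κ (Fin (n * n)) ℝ) (u : Fin n → ℝ) :
    sqNorm (leftReshape M *ᵥ u) = frobSq (leftContract M u) :=
  Fintype.sum_prod_type _

lemma frobSq_leftReshape (M : Matrix κ (Fin (n * n)) ℝ) : frobSq (leftReshape M) = frobSq M := by
  simp only [frobSq, leftReshape, Fintype.sum_prod_type, sum_finProdFinEquiv, of_apply]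
  exact Finset.sum_congr rfl fun i _ => Finset.sum_comm

variable [DecidableEq κ] {M : Matrix κ (Fin (n * n)) ℝ}

lemma l2_opNorm_leftContract_sq_le (hM : M * Mᵀ = 1) (u : Fin n → ℝ) :
    ‖leftContract M u‖ ^ 2 ≤ sqNorm u := by
  have hM1 : ‖M‖ ^ 2 ≤ 1 := by
    rw [← l2_opNorm_transpose]
    refine l2_opNorm_sq_le zero_le_one fun x => ?_
    rw [sqNorm_mulVec_of_transpose_mul_self (by rwa [transpose_transpose]), one_mul]
  refine l2_opNorm_sq_le (sqNorm_nonneg u) fun v => ?_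
  rw [leftContract_mulVec, ← frobSq_vecMulVec, ← sqNorm_vec]
  exact (sqNorm_mulVec_le _ _).trans (mul_le_of_le_one_left (sqNorm_nonneg _) hM1)

lemma l2_opNorm_leftReshape_sq_le (hM : M * Mᵀ = 1) : ‖leftReshape M‖ ^ 2 ≤ n := by
  refine l2_opNorm_sq_le n.cast_nonneg fun u => ?_
  rw [sqNorm_leftReshape_mulVec]
  refine (frobSq_le_card_mul_l2_opNorm_sq _).trans ?_
  rw [Fintype.card_fin]
  gcongr
  exact l2_opNorm_leftContract_sq_le hM u

/-- The rank-one matrix `u vᵀ` with sign vectors `u` and `v` coded by `θ`. -/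
def signMatrix (θ : (Fin n → Bool) × (Fin n → Bool)) : Matrix (Fin n) (Fin n) ℝ :=
  vecMulVec (signVec θ.1) (signVec θ.2)

/-- The order-two chaos bound is applied in the right factor for a fixed left factor, then in the
left factor. -/
lemma expect_exp_sqNorm_mulVec_signMatrix_le (hn : 0 < n) (hM : M * Mᵀ = 1) :
    𝔼 θ, Real.exp (1 / (8 * n) * sqNorm (M *ᵥ _root_.vec n (signMatrix θ))) ≤
      Real.exp (Fintype.card κ / (2 * n)) := by
  have hn' : (0 : ℝ) < n := Nat.cast_pos.2 hn
  have hright (b : Fin n → Bool) :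
      𝔼 b', Real.exp (1 / (8 * n) * sqNorm (leftContract M (signVec b) *ᵥ signVec b')) ≤
        Real.exp (1 / (4 * n) * sqNorm (leftReshape M *ᵥ signVec b)) := by
    have hnorm : ‖leftContract M (signVec b)‖ ^ 2 ≤ n := by
      simpa only [sqNorm_signVec, Fintype.card_fin] using
        l2_opNorm_leftContract_sq_le hM (signVec b)
    refine (expect_exp_sqNorm_mulVec_signVec_le _ (by positivity) ?_).trans_eq ?_
    · calc 1 / (8 * n) * ‖leftContract M (signVec b)‖ ^ 2 ≤ 1 / (8 * n) * n := by gcongr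
        _ ≤ 1 / 4 := by field_simp; norm_num
    · rw [sqNorm_leftReshape_mulVec]
      congr 2
      field_simp
      norm_num
  calc 𝔼 θ, Real.exp (1 / (8 * n) * sqNorm (M *ᵥ _root_.vec n (signMatrix θ)))
      = 𝔼 b, 𝔼 b', Real.exp (1 / (8 * n) *
          sqNorm (leftContract M (signVec b) *ᵥ signVec b')) := by
        rw [← Finset.univ_product_univ, Finset.expect_product]
        simp only [signMatrix, leftContract_mulVec]
    _ ≤ 𝔼 b, Real.exp (1 / (4 * n) * sqNorm (leftReshape M *ᵥ signVec b)) :=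
        Finset.expect_le_expect fun b _ => hright b
    _ ≤ Real.exp (2 * (1 / (4 * n)) * frobSq (leftReshape M)) := by
        refine expect_exp_sqNorm_mulVec_signVec_le _ (by positivity) ?_
        calc 1 / (4 * n) * ‖leftReshape M‖ ^ 2 ≤ 1 / (4 * n) * n := by
              gcongr
              exact l2_opNorm_leftReshape_sq_le hM
          _ = 1 / 4 := by field_simp
    _ = Real.exp (Fintype.card κ / (2 * n)) := by
        rw [frobSq_leftReshape, frobSq_of_mul_transpose_self hM]
        congr 1
        field_simp
        norm_num

lemma query_energy_le (hn : 0 < n) (hM : M * Mᵀ = 1) (α : ℝ)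
    {w : (Fin n → Bool) × (Fin n → Bool) → ℝ} (hw : ∀ θ, 0 < w θ) :
    𝔼 θ, w θ * (sqNorm (M *ᵥ _root_.vec n (α • signMatrix θ)) / 2) ≤
      4 * (α ^ 2 * n) * (ent w + Fintype.card κ / (2 * n) * 𝔼 θ, w θ) := by
  have hn' : (0 : ℝ) < n := Nat.cast_pos.2 hn
  have hscale (θ : (Fin n → Bool) × (Fin n → Bool)) :
      w θ * (sqNorm (M *ᵥ _root_.vec n (α • signMatrix θ)) / 2) =
        4 * (α ^ 2 * n) * (w θ * (1 / (8 * n) * sqNorm (M *ᵥ _root_.vec n (signMatrix θ)))) := by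
    have hvec : _root_.vec n (α • signMatrix θ) = α • _root_.vec n (signMatrix θ) := rfl
    rw [hvec, mulVec_smul, sqNorm_smul]
    field_simp
    ring
  simp only [hscale, ← Finset.mul_expect]
  gcongr
  refine (expect_mul_le_ent_add hw _).trans ?_
  rw [mul_comm (_ / _)]
  gcongr
  · exact (expect_pos_of_pos hw).le
  · rw [Real.log_le_iff_le_exp (expect_pos_of_pos fun _ => Real.exp_pos _)]
    exact expect_exp_sqNorm_mulVec_signMatrix_le hn hM

end QueryEnergy

/-! ### Success probability of a fixed output -/

section FixedOutput

open scoped Matrix.Norms.L2Operator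

variable {ι κ : Type*} [Fintype ι] [Fintype κ]

lemma frobSq_nonneg (A : Matrix ι κ ℝ) : 0 ≤ frobSq A :=
  Finset.sum_nonneg fun _ _ => Finset.sum_nonneg fun _ _ => sq_nonneg _

lemma l2_opNorm_sq_le_frobSq [DecidableEq κ] (A : Matrix ι κ ℝ) : ‖A‖ ^ 2 ≤ frobSq A :=
  l2_opNorm_sq_le (frobSq_nonneg A) fun x => by
    rw [sqNorm, frobSq, Finset.sum_mul]
    exact Finset.sum_le_sum fun i _ => Finset.sum_mul_sq_le_sq_mul_sq Finset.univ (A i) x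

lemma frobSq_add (A B : Matrix ι κ ℝ) :
    frobSq (A + B) = frobSq A + 2 * (Aᵀ * B).trace + frobSq B := by
  have hcomm : (Bᵀ * A).trace = (Aᵀ * B).trace := by
    rw [← trace_transpose, transpose_mul, transpose_transpose]
  simp only [frobSq_eq_trace, transpose_add, Matrix.add_mul, Matrix.mul_add, trace_add, hcomm]
  ring

lemma frobSq_neg (A : Matrix ι κ ℝ) : frobSq (-A) = frobSq A := by
  simp only [frobSq, Matrix.neg_apply, neg_sq]

lemma frobSq_sub (A B : Matrix ι κ ℝ) :
    frobSq (A - B) = frobSq A - 2 * (Aᵀ * B).trace + frobSq B := by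
  rw [sub_eq_add_neg, frobSq_add, frobSq_neg, Matrix.mul_neg, trace_neg]
  ring

lemma trace_transpose_vecMulVec_mul (u : ι → ℝ) (v : κ → ℝ) (B : Matrix ι κ ℝ) :
    ((vecMulVec u v)ᵀ * B).trace = (Bᵀ *ᵥ u) ⬝ᵥ v := by
  rw [transpose_vecMulVec, vecMulVec_mul, trace_vecMulVec, mulVec_transpose, dotProduct_comm]

variable {n : ℕ}

lemma frobSq_signMatrix (θ : (Fin n → Bool) × (Fin n → Bool)) :
    frobSq (signMatrix θ) = (n : ℝ) ^ 2 := by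
  rw [signMatrix, frobSq_vecMulVec, sqNorm_signVec, sqNorm_signVec, Fintype.card_fin, sq]

lemma expect_exp_trace_signMatrix_le (B : Matrix (Fin n) (Fin n) ℝ) (l : ℝ) :
    𝔼 θ, Real.exp (l * ((signMatrix θ)ᵀ * B).trace) ≤ Real.exp (l ^ 2 * n * frobSq B / 2) := by
  rw [← Finset.univ_product_univ, Finset.expect_product]
  refine (Finset.expect_le_expect (g := fun _ => Real.exp (l ^ 2 * n * frobSq B / 2))
    fun b _ => ?_).trans_eq (Fintype.expect_const _)
  have htrace (b' : Fin n → Bool) : l * ((signMatrix (b, b'))ᵀ * B).trace =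
      (l • (Bᵀ *ᵥ signVec b)) ⬝ᵥ signVec b' := by
    rw [signMatrix, trace_transpose_vecMulVec_mul, smul_dotProduct, smul_eq_mul]
  simp only [htrace]
  refine (expect_exp_dotProduct_signVec_le _).trans (Real.exp_le_exp.2 ?_)
  have hB : sqNorm (Bᵀ *ᵥ signVec b) ≤ frobSq B * n := by
    refine (sqNorm_mulVec_le _ _).trans ?_
    rw [sqNorm_signVec, Fintype.card_fin, ← frobSq_transpose B]
    gcongr
    exact l2_opNorm_sq_le_frobSq _
  rw [sqNorm_smul, mul_assoc (l ^ 2), mul_comm (n : ℝ)]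
  gcongr

/-- Chernoff bound for the correlation `tr (u vᵀ)ᵀ B` that closeness to `u vᵀ` forces. -/
lemma card_close_signMatrix_le (hn : 0 < n) (B : Matrix (Fin n) (Fin n) ℝ) :
    ((Finset.univ.filter fun θ : (Fin n → Bool) × (Fin n → Bool) =>
        frobSq (signMatrix θ - B) ≤ n ^ 2 / 2).card : ℝ) ≤
      Real.exp (-(n / 4)) * Fintype.card ((Fin n → Bool) × (Fin n → Bool)) := by
  have hn' : (0 : ℝ) < n := Nat.cast_pos.2 hn
  set c : ℝ := n / 4 + frobSq B / (2 * n)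
  have hclose (θ : (Fin n → Bool) × (Fin n → Bool)) (hθ : frobSq (signMatrix θ - B) ≤ n ^ 2 / 2) :
      0 ≤ 1 / n * ((signMatrix θ)ᵀ * B).trace - c := by
    rw [frobSq_sub, frobSq_signMatrix] at hθ
    have hcorr : 1 / n * ((signMatrix θ)ᵀ * B).trace - c =
        (2 * ((signMatrix θ)ᵀ * B).trace - (n ^ 2 / 2 + frobSq B)) / (2 * n) := by
      simp only [c]
      field_simp
      ring
    rw [hcorr]
    exact div_nonneg (by linarith) (by positivity)
  rw [← div_le_iff₀ (Nat.cast_pos.2 Fintype.card_pos), Finset.card_filter, Nat.cast_sum,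
    ← Fintype.expect_eq_sum_div_card]
  calc 𝔼 θ, (((if frobSq (signMatrix θ - B) ≤ n ^ 2 / 2 then 1 else 0 : ℕ)) : ℝ)
      ≤ 𝔼 θ, Real.exp (1 / n * ((signMatrix θ)ᵀ * B).trace) * Real.exp (-c) := by
        refine Finset.expect_le_expect fun θ _ => ?_
        rw [← Real.exp_add, ← sub_eq_add_neg]
        split_ifs with hθ
        · simpa only [Nat.cast_one] using Real.one_le_exp (hclose θ hθ)
        · simpa only [Nat.cast_zero] using (Real.exp_pos _).le
    _ ≤ Real.exp ((1 / n) ^ 2 * n * frobSq B / 2) * Real.exp (-c) := by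
        rw [← Finset.expect_mul]
        gcongr
        exact expect_exp_trace_signMatrix_le B _
    _ = Real.exp (-(n / 4)) := by
        rw [← Real.exp_add]
        congr 1
        simp only [c]
        field_simp
        ring

lemma fixed_output_success_le (hn : 0 < n) {α : ℝ} (hα : 0 < α) (B : Matrix (Fin n) (Fin n) ℝ)
    {w : (Fin n → Bool) × (Fin n → Bool) → ℝ} (hw : ∀ θ, 0 < w θ) :
    𝔼 θ, w θ * (if frobSq (α • signMatrix θ - B) ≤ frobSq (α • signMatrix θ) / 2 then 1 else 0) ≤
      4 / n * (ent w + 𝔼 θ, w θ) := by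
  have hn' : (0 : ℝ) < n := Nat.cast_pos.2 hn
  have hscale (θ : (Fin n → Bool) × (Fin n → Bool)) :
      frobSq (α • signMatrix θ - B) ≤ frobSq (α • signMatrix θ) / 2 ↔
        frobSq (signMatrix θ - α⁻¹ • B) ≤ n ^ 2 / 2 := by
    have hsub : α • signMatrix θ - B = α • (signMatrix θ - α⁻¹ • B) := by
      rw [smul_sub, smul_inv_smul₀ hα.ne']
    rw [hsub, frobSq_smul, frobSq_smul, frobSq_signMatrix, mul_div_assoc,
      mul_le_mul_iff_right₀ (by positivity)]
  have h := expect_indicator_le_ent_add hw _ (card_close_signMatrix_le hn (α⁻¹ • B))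
  simp only [Finset.mem_filter_univ] at h
  simp only [hscale]
  calc _ = 4 / n * (n / 4 * 𝔼 θ, w θ *
        (if frobSq (signMatrix θ - α⁻¹ • B) ≤ n ^ 2 / 2 then 1 else 0)) := by
        rw [← mul_assoc, div_mul_div_cancel₀' (by positivity), div_self hn'.ne', one_mul]
    _ ≤ 4 / n * (ent w + 𝔼 θ, w θ) := by gcongr

end FixedOutput

/-! ### Norms of a Gaussian matrix -/

section Nets

open Metric
open scoped NNReal

lemma card_le_of_isSeparated_closedBall {E : Type*} [NormedAddCommGroup E] [NormedSpace ℝ E]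
    [FiniteDimensional ℝ E] (s : Finset E) (hs : (s : Set E) ⊆ closedBall 0 1)
    (hsep : IsSeparated (2⁻¹ : ℝ≥0) (s : Set E)) : s.card ≤ 5 ^ Module.finrank ℝ E := by
  have hinj : Function.Injective fun x : E => (2 : ℝ) • x := smul_right_injective E two_ne_zero
  rw [← Finset.card_image_of_injective s hinj]
  refine Besicovitch.card_le_of_separated _ ?_ ?_
  · intro _ himage
    obtain ⟨x, hx, rfl⟩ := Finset.mem_image.1 himage
    have := mem_closedBall_zero_iff.1 (hs hx)
    rw [norm_smul, Real.norm_ofNat]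
    linarith
  · intro _ hximage _ hyimage hxy
    obtain ⟨x, hx, rfl⟩ := Finset.mem_image.1 hximage
    obtain ⟨y, hy, rfl⟩ := Finset.mem_image.1 hyimage
    have h : (2⁻¹ : ℝ≥0) < edist x y := hsep hx hy (ne_of_apply_ne _ hxy)
    rw [edist_nndist, ENNReal.coe_lt_coe, ← NNReal.coe_lt_coe, coe_nndist, dist_eq_norm,
      NNReal.coe_inv, NNReal.coe_ofNat] at h
    rw [← smul_sub, norm_smul, Real.norm_ofNat]
    linarith

lemma packingNumber_closedBall_le (E : Type*) [NormedAddCommGroup E] [NormedSpace ℝ E]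
    [FiniteDimensional ℝ E] :
    packingNumber 2⁻¹ (closedBall (0 : E) 1) ≤ (5 ^ Module.finrank ℝ E : ℕ) := by
  refine iSup_le fun C => iSup₂_le fun hC hsep => ?_
  by_contra! hcard
  obtain ⟨D, hDC, hD⟩ := Set.exists_subset_encard_eq (Order.add_one_le_of_lt hcard)
  have hfin : D.Finite := Set.finite_of_encard_eq_coe (k := 5 ^ Module.finrank ℝ E + 1) hD
  have hle := card_le_of_isSeparated_closedBall hfin.toFinset
    (by simpa using hDC.trans hC) (by simpa using hsep.subset hDC)
  rw [hfin.encard_eq_coe_toFinset_card] at hD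
  have : hfin.toFinset.card = 5 ^ Module.finrank ℝ E + 1 := by exact_mod_cast hD
  lia

lemma exists_isCover_closedBall (E : Type*) [NormedAddCommGroup E] [NormedSpace ℝ E]
    [FiniteDimensional ℝ E] :
    ∃ T : Finset E, T.card ≤ 5 ^ Module.finrank ℝ E ∧ (T : Set E) ⊆ closedBall 0 1 ∧
      IsCover 2⁻¹ (closedBall (0 : E) 1) T := by
  have hle := packingNumber_closedBall_le E
  have htop := ne_top_of_le_ne_top (ENat.natCast_ne_top _) hle
  have hcard := encard_maximalSeparatedSet htop
  have hfin : (maximalSeparatedSet 2⁻¹ (closedBall (0 : E) 1)).Finite :=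
    Set.encard_ne_top_iff.1 (hcard ▸ htop)
  refine ⟨hfin.toFinset, ?_, ?_, ?_⟩
  · rw [← hcard, hfin.encard_eq_coe_toFinset_card] at hle
    exact_mod_cast hle
  · simpa using maximalSeparatedSet_subset
  · simpa using isCover_maximalSeparatedSet htop

lemma exists_norm_sub_le_of_isCover {E : Type*} [NormedAddCommGroup E] {T : Set E}
    (hT : IsCover 2⁻¹ (closedBall (0 : E) 1) T) {x : E} (hx : ‖x‖ ≤ 1) :
    ∃ y ∈ T, ‖x - y‖ ≤ 1 / 2 := by
  obtain ⟨y, hy, hxy⟩ := hT (mem_closedBall_zero_iff.2 hx)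
  refine ⟨y, hy, ?_⟩
  have h : edist x y ≤ (2⁻¹ : ℝ≥0) := hxy
  rw [edist_nndist, ENNReal.coe_le_coe, ← NNReal.coe_le_coe, coe_nndist, dist_eq_norm,
    NNReal.coe_inv, NNReal.coe_ofNat] at h
  rwa [one_div]

lemma norm_le_of_inner_le_of_isCover {F : Type*} [NormedAddCommGroup F] [InnerProductSpace ℝ F]
    {S : Set F} (hS : IsCover 2⁻¹ (closedBall (0 : F) 1) S) {v : F} {τ : ℝ}
    (h : ∀ y ∈ S, inner ℝ y v ≤ τ) : ‖v‖ ≤ 2 * τ := by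
  have hunit : ‖‖v‖⁻¹ • v‖ ≤ 1 := by
    simpa only [norm_smul, norm_inv, norm_norm] using
      inv_mul_le_one_of_le₀ le_rfl (norm_nonneg v)
  obtain ⟨y, hy, hvy⟩ := exists_norm_sub_le_of_isCover hS hunit
  have hnorm : inner ℝ (‖v‖⁻¹ • v) v = ‖v‖ := by
    rw [real_inner_smul_left, real_inner_self_eq_norm_sq, sq, ← mul_assoc, inv_mul_mul_self]
  have hsplit : inner ℝ (‖v‖⁻¹ • v - y) v = ‖v‖ - inner ℝ y v := by
    rw [inner_sub_left, hnorm]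
  have hcs := real_inner_le_norm (‖v‖⁻¹ • v - y) v
  linarith [h y hy, mul_le_mul_of_nonneg_right hvy (norm_nonneg v)]

lemma opNorm_le_of_isCover {E F : Type*} [NormedAddCommGroup E] [NormedSpace ℝ E]
    [NormedAddCommGroup F] [NormedSpace ℝ F] {T : Set E}
    (hT : IsCover 2⁻¹ (closedBall (0 : E) 1) T) {L : E →L[ℝ] F} {c : ℝ}
    (h : ∀ x ∈ T, ‖L x‖ ≤ c) : ‖L‖ ≤ 2 * c := by
  have hc : 0 ≤ c := by
    obtain ⟨x, hx, -⟩ := exists_norm_sub_le_of_isCover hT (x := 0) (by simp)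
    exact (norm_nonneg _).trans (h x hx)
  suffices ‖L‖ ≤ c + ‖L‖ / 2 by linarith
  refine ContinuousLinearMap.opNorm_le_of_unit_norm (by positivity) fun x hx => ?_
  obtain ⟨y, hy, hxy⟩ := exists_norm_sub_le_of_isCover hT hx.le
  calc ‖L x‖ = ‖L y + L (x - y)‖ := by rw [← map_add, add_sub_cancel]
    _ ≤ ‖L y‖ + ‖L‖ * ‖x - y‖ := (norm_add_le _ _).trans (by gcongr; exact L.le_opNorm _)
    _ ≤ c + ‖L‖ * (1 / 2) := by gcongr; exact h y hy
    _ = c + ‖L‖ / 2 := by ring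

end Nets

section GaussianMatrix

open scoped Matrix.Norms.L2Operator

variable {n : ℕ}

/-- The matrix with a given flattening: the inverse of `vec`. -/
def unvec (g : Fin (n * n) → ℝ) : Matrix (Fin n) (Fin n) ℝ :=
  .of fun i j => g (finProdFinEquiv (i, j))

lemma vec_unvec (g : Fin (n * n) → ℝ) : _root_.vec n (unvec g) = g := by
  ext i
  simp only [_root_.vec, unvec, of_apply, Prod.mk.eta, Equiv.apply_symm_apply]

lemma frobSq_unvec (g : Fin (n * n) → ℝ) : frobSq (unvec g) = sqNorm g := by
  rw [← sqNorm_vec, vec_unvec]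

lemma dotProduct_unvec_mulVec (g : Fin (n * n) → ℝ) (x y : Fin n → ℝ) :
    y ⬝ᵥ (unvec g *ᵥ x) = _root_.vec n (vecMulVec y x) ⬝ᵥ g := by
  rw [dotProduct, dotProduct, sum_finProdFinEquiv]
  simp only [vec_finProdFinEquiv, vecMulVec_apply, mulVec, dotProduct, unvec, of_apply,
    Finset.mul_sum]
  exact Finset.sum_congr rfl fun a _ => Finset.sum_congr rfl fun b _ => by ring

lemma l2_opNorm_le_of_isCover {T : Set (EuclideanSpace ℝ (Fin n))}
    (hT : Metric.IsCover 2⁻¹ (Metric.closedBall 0 1) T) {A : Matrix (Fin n) (Fin n) ℝ} {τ : ℝ}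
    (h : ∀ x ∈ T, ∀ y ∈ T, y.ofLp ⬝ᵥ (A *ᵥ x.ofLp) ≤ τ) : ‖A‖ ≤ 4 * τ := by
  rw [← l2_opNorm_toEuclideanCLM A]
  have hL := opNorm_le_of_isCover hT (L := toEuclideanCLM (𝕜 := ℝ) A) fun x hx =>
    norm_le_of_inner_le_of_isCover hT (τ := τ) fun y hy => by
      rw [EuclideanSpace.inner_eq_star_dotProduct, dotProduct_comm, ofLp_toEuclideanCLM]
      exact h x hx y hy
  linarith

lemma stdGaussian_inner_unvec_tail_le {x y : EuclideanSpace ℝ (Fin n)} (hx : ‖x‖ ≤ 1)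
    (hy : ‖y‖ ≤ 1) {τ : ℝ} (hτ : 0 ≤ τ) :
    (stdGaussian (Fin (n * n))).real {g | τ < y.ofLp ⬝ᵥ (unvec g *ᵥ x.ofLp)} ≤
      Real.exp (-(τ ^ 2 / 2)) := by
  simp only [dotProduct_unvec_mulVec]
  refine stdGaussian_tail_le ?_ hτ
  rw [sqNorm_vec, frobSq_vecMulVec, sqNorm, sqNorm, ← EuclideanSpace.real_norm_sq_eq,
    ← EuclideanSpace.real_norm_sq_eq]
  exact mul_le_one₀ (pow_le_one₀ (norm_nonneg y) hy) (sq_nonneg _) (pow_le_one₀ (norm_nonneg x) hx)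

lemma exp_neg_eight_le : Real.exp (-8) ≤ 1 / 500 := by
  rw [Real.exp_neg, ← one_div]
  refine one_div_le_one_div_of_le (by norm_num) ?_
  calc (500 : ℝ) ≤ 2.7 ^ 8 := by norm_num
    _ ≤ Real.exp 1 ^ 8 := by gcongr; linarith [Real.exp_one_gt_d9]
    _ = Real.exp 8 := by rw [← Real.exp_nat_mul]; norm_num

/-- Union bound over pairs of points of a `1/2`-net of the unit ball. -/
lemma stdGaussian_l2_opNorm_tail_le (hn : 0 < n) :
    (stdGaussian (Fin (n * n))).real {g | 16 * √n < ‖unvec g‖} ≤ 1 / 20 := by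
  obtain ⟨T, hcard, hball, hT⟩ := exists_isCover_closedBall (EuclideanSpace ℝ (Fin n))
  rw [finrank_euclideanSpace_fin] at hcard
  have hnorm {x} (hx : x ∈ T) : ‖x‖ ≤ 1 := mem_closedBall_zero_iff.1 (hball hx)
  have hsub : {g | 16 * √n < ‖unvec g‖} ⊆ ⋃ p ∈ T ×ˢ T,
      {g | 4 * √n < p.2.ofLp ⬝ᵥ (unvec g *ᵥ p.1.ofLp)} := by
    intro g hg
    by_contra hcon
    simp only [Set.mem_iUnion, Finset.mem_product, Set.mem_ofPred_eq, exists_prop, Prod.exists,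
      not_exists, not_and, not_lt, and_imp] at hcon
    have := l2_opNorm_le_of_isCover hT fun x hx y hy => hcon x y hx hy
    rw [Set.mem_ofPred_eq] at hg
    linarith
  have hterm (p) (hp : p ∈ T ×ˢ T) : (stdGaussian (Fin (n * n))).real
      {g | 4 * √n < p.2.ofLp ⬝ᵥ (unvec g *ᵥ p.1.ofLp)} ≤ (1 / 500) ^ n := by
    obtain ⟨hx, hy⟩ := Finset.mem_product.1 hp
    refine (stdGaussian_inner_unvec_tail_le (hnorm hx) (hnorm hy) (by positivity)).trans ?_
    have hexp : -((4 * √n) ^ 2 / 2) = n * (-8) := by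
      rw [mul_pow, Real.sq_sqrt n.cast_nonneg]
      ring
    rw [hexp, Real.exp_nat_mul]
    gcongr
    exact exp_neg_eight_le
  calc (stdGaussian (Fin (n * n))).real {g | 16 * √n < ‖unvec g‖}
      ≤ ∑ _p ∈ T ×ˢ T, (1 / 500 : ℝ) ^ n :=
        (measureReal_mono hsub (measure_ne_top _ _)).trans
          ((measureReal_biUnion_finset_le _ _).trans (Finset.sum_le_sum hterm))
    _ = T.card * T.card * (1 / 500 : ℝ) ^ n := by
        rw [Finset.sum_const, Finset.card_product, nsmul_eq_mul, Nat.cast_mul]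
    _ ≤ 5 ^ n * 5 ^ n * (1 / 500 : ℝ) ^ n := by
        gcongr <;> exact_mod_cast hcard
    _ = (1 / 20) ^ n := by rw [← mul_pow, ← mul_pow]; norm_num
    _ ≤ 1 / 20 := pow_le_of_le_one (by norm_num) (by norm_num) hn.ne'

lemma stdGaussian_frobSq_tail_le (hn : 0 < n) :
    (stdGaussian (Fin (n * n))).real {g | 20 * (n : ℝ) ^ 2 ≤ frobSq (unvec g)} ≤ 1 / 20 := by
  have hmarkov := mul_meas_ge_le_integral_of_nonneg
    (Filter.Eventually.of_forall sqNorm_nonneg) (integrable_sqNorm_stdGaussian (ι := Fin (n * n)))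
    (20 * (n : ℝ) ^ 2)
  rw [integral_sqNorm_stdGaussian, Fintype.card_fin, Nat.cast_mul] at hmarkov
  simp only [frobSq_unvec]
  have : (0 : ℝ) < n ^ 2 := by positivity
  nlinarith

lemma le_stdGaussian_norms_le (hn : 0 < n) :
    9 / 10 ≤ (stdGaussian (Fin (n * n))).real
      {g | ‖unvec g‖ ≤ 16 * √n ∧ frobSq (unvec g) ≤ 20 * n ^ 2} := by
  set good : Set (Fin (n * n) → ℝ) := {g | ‖unvec g‖ ≤ 16 * √n ∧ frobSq (unvec g) ≤ 20 * n ^ 2}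
  have hcover : Set.univ ⊆ good ∪ ({g | 16 * √n < ‖unvec g‖} ∪
      {g | 20 * (n : ℝ) ^ 2 ≤ frobSq (unvec g)}) := by
    intro g _
    simp only [good, Set.mem_union, Set.mem_ofPred_eq]
    grind
  have hle := (measureReal_mono (μ := stdGaussian (Fin (n * n))) hcover).trans
    ((measureReal_union_le _ _).trans (add_le_add_right (measureReal_union_le _ _) _))
  rw [probReal_univ] at hle
  linarith [stdGaussian_l2_opNorm_tail_le hn, stdGaussian_frobSq_tail_le hn]

end GaussianMatrix

/-! ### Spiked matrices -/

section Spikes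

open scoped Matrix.Norms.L2Operator

variable {ι κ : Type*} [Fintype κ]

lemma exists_eq_vecMulVec_of_rank_le_one {M : Matrix ι κ ℝ} (hM : M.rank ≤ 1) :
    ∃ u v, M = vecMulVec u v := by
  obtain ⟨u, hu⟩ := finrank_le_one_iff.1 hM
  have hcol (j : κ) : ∃ c : ℝ, c • (u : ι → ℝ) = M.col j := by
    obtain ⟨c, hc⟩ := hu ⟨M *ᵥ Pi.single j 1, ⟨Pi.single j 1, rfl⟩⟩
    exact ⟨c, by simpa using congrArg Subtype.val hc⟩
  choose v hv using hcol
  refine ⟨u, v, ext fun i j => ?_⟩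
  rw [vecMulVec_apply, mul_comm]
  exact (congrFun (hv j) i).symm

lemma eq_zero_of_rank_eq_zero {M : Matrix ι κ ℝ} (hM : M.rank = 0) : M = 0 := by
  rw [Matrix.rank, Submodule.finrank_eq_zero, LinearMap.range_eq_bot] at hM
  exact ext_of_mulVec_single fun j => by
    rw [zero_mulVec]
    exact LinearMap.congr_fun hM (Pi.single j 1)

variable [Fintype ι]

lemma trace_transpose_mul_sq_le_of_rank_le_one [DecidableEq κ] {M : Matrix ι κ ℝ}
    (hM : M.rank ≤ 1) (H : Matrix ι κ ℝ) : (Mᵀ * H).trace ^ 2 ≤ ‖H‖ ^ 2 * frobSq M := by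
  obtain ⟨u, v, rfl⟩ := exists_eq_vecMulVec_of_rank_le_one hM
  rw [trace_transpose_vecMulVec_mul, frobSq_vecMulVec, ← mul_assoc]
  calc ((Hᵀ *ᵥ u) ⬝ᵥ v) ^ 2 ≤ sqNorm (Hᵀ *ᵥ u) * sqNorm v :=
        Finset.sum_mul_sq_le_sq_mul_sq Finset.univ _ v
    _ ≤ ‖H‖ ^ 2 * sqNorm u * sqNorm v := by
        gcongr
        · exact sqNorm_nonneg v
        · simpa only [l2_opNorm_transpose] using sqNorm_mulVec_le Hᵀ u

lemma frobSq_eq_l2_opNorm_sq_of_rank_le_one [DecidableEq κ] {M : Matrix ι κ ℝ}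
    (hM : M.rank ≤ 1) : frobSq M = ‖M‖ ^ 2 := by
  refine le_antisymm ?_ (l2_opNorm_sq_le_frobSq M)
  have h := trace_transpose_mul_sq_le_of_rank_le_one hM M
  rw [← frobSq_eq_trace, sq] at h
  rcases (frobSq_nonneg M).eq_or_lt with h0 | hpos
  · exact h0 ▸ sq_nonneg _
  · exact le_of_mul_le_mul_right h hpos

lemma specNorm_eq_l2_opNorm [DecidableEq κ] (A : Matrix ι κ ℝ) : specNorm A = ‖A‖ := by
  have hball : Metric.closedBall (0 : EuclideanSpace ℝ κ) 1 =
      WithLp.toLp 2 '' {x | sqNorm x ≤ 1} := by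
    ext x
    constructor
    · intro hx
      refine ⟨x.ofLp, ?_, rfl⟩
      rw [Set.mem_ofPred_eq, ← norm_toLp_sq]
      exact pow_le_one₀ (norm_nonneg _) (mem_closedBall_zero_iff.1 hx)
    · rintro ⟨x, hx, rfl⟩
      rw [mem_closedBall_zero_iff, ← sq_le_one_iff₀ (norm_nonneg _), norm_toLp_sq]
      exact hx
  rw [l2_opNorm_def, ← ContinuousLinearMap.sSup_unitClosedBall_eq_norm, hball,
    Set.image_image, specNorm]
  congr 1
  refine Set.image_congr fun x _ => ?_
  rw [← norm_toLp_sq, Real.sqrt_sq (norm_nonneg _)]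
  rfl

lemma singVal_le_of_rank_le [DecidableEq κ] (A : Matrix ι κ ℝ) {X : Matrix ι κ ℝ} {i : ℕ}
    (hX : X.rank ≤ i - 1) : singVal A i ≤ ‖A - X‖ := by
  rw [← specNorm_eq_l2_opNorm]
  refine csInf_le ⟨0, ?_⟩ ⟨X, hX, rfl⟩
  rintro _ ⟨Y, -, rfl⟩
  exact specNorm_eq_l2_opNorm (A - Y) ▸ norm_nonneg _

lemma singVal_one [DecidableEq κ] (A : Matrix ι κ ℝ) : singVal A 1 = ‖A‖ := by
  have hset : {c | ∃ X : Matrix ι κ ℝ, X.rank ≤ 1 - 1 ∧ c = specNorm (A - X)} = {‖A‖} := by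
    ext c
    constructor
    · rintro ⟨X, hX, rfl⟩
      rw [eq_zero_of_rank_eq_zero (Nat.le_zero.1 hX), sub_zero, specNorm_eq_l2_opNorm]
      rfl
    · rintro rfl
      exact ⟨0, rank_zero.le, by rw [sub_zero, specNorm_eq_l2_opNorm]⟩
  rw [singVal, hset, csInf_singleton]

lemma two_mul_singVal_two_le [DecidableEq κ] {S H : Matrix ι κ ℝ} (hS : S.rank ≤ 1)
    (hH : 3 * ‖H‖ ≤ ‖S‖) : 2 * singVal (S + H) 2 ≤ singVal (S + H) 1 := by
  have hsecond : singVal (S + H) 2 ≤ ‖H‖ := by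
    simpa only [add_sub_cancel_left] using singVal_le_of_rank_le (S + H) (X := S) (i := 2) hS
  have hfirst : ‖S‖ - ‖H‖ ≤ ‖S + H‖ := by
    simpa only [norm_neg, sub_neg_eq_add] using norm_sub_norm_le S (-H)
  rw [singVal_one]
  linarith

lemma frobSq_sub_le (A B : Matrix ι κ ℝ) : frobSq (A - B) ≤ 2 * frobSq A + 2 * frobSq B := by
  have h := frobSq_nonneg (A + B)
  rw [frobSq_add] at h
  rw [frobSq_sub]
  linarith

/-- The cross terms between `H` and the two rank-one matrices are controlled by `‖H‖`. -/
lemma frobSq_sub_le_of_frobSq_add_sub_le [DecidableEq κ] {S B H : Matrix ι κ ℝ}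
    (hS : S.rank ≤ 1) (hB : B.rank ≤ 1) {ε : ℝ}
    (h : frobSq (S + H - B) ≤ (1 + ε) * frobSq H) (hε : 0 ≤ ε) :
    frobSq (S - B) ≤ frobSq S / 4 + 40 * ‖H‖ ^ 2 + 2 * ε * frobSq H := by
  have hcross {M : Matrix ι κ ℝ} (hM : M.rank ≤ 1) :
      |2 * (Mᵀ * H).trace| ≤ frobSq M / 16 + 16 * ‖H‖ ^ 2 := by
    have hnonneg := frobSq_nonneg M
    refine abs_le_of_sq_le_sq ?_ (by positivity)
    nlinarith [trace_transpose_mul_sq_le_of_rank_le_one hM H,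
      sq_nonneg (frobSq M / 16 - 16 * ‖H‖ ^ 2)]
  have hexpand : frobSq (S + H - B) =
      frobSq (S - B) + (2 * (Sᵀ * H).trace - 2 * (Bᵀ * H).trace) + frobSq H := by
    rw [add_sub_right_comm, frobSq_add, transpose_sub, Matrix.sub_mul, trace_sub, mul_sub]
  have hB_le : frobSq B ≤ 2 * frobSq S + 2 * frobSq (S - B) := by
    simpa only [sub_sub_cancel] using frobSq_sub_le S (S - B)
  have := (abs_le.1 (hcross hS)).1
  have := (abs_le.1 (hcross hB)).2
  have := mul_nonneg hε (frobSq_nonneg H)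
  linarith [frobSq_nonneg S, sq_nonneg ‖H‖]

/-- `B` has rank at most one and approximates `A` in squared Frobenius norm within a factor
`1 + ε` of the best approximation of rank at most one. -/
def IsNearBestRankOne (ε : ℝ) (A B : Matrix ι κ ℝ) : Prop :=
  B.rank ≤ 1 ∧
    frobSq (A - B) ≤ (1 + ε) * sInf {c | ∃ X : Matrix ι κ ℝ, X.rank ≤ 1 ∧ c = frobSq (A - X)}

lemma IsNearBestRankOne.frobSq_sub_le_mul {ε : ℝ} (hε : 0 ≤ 1 + ε) {A B X : Matrix ι κ ℝ}
    (h : IsNearBestRankOne ε A B) (hX : X.rank ≤ 1) :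
    frobSq (A - B) ≤ (1 + ε) * frobSq (A - X) := by
  refine h.2.trans (mul_le_mul_of_nonneg_left (csInf_le ⟨0, ?_⟩ ⟨X, hX, rfl⟩) hε)
  rintro _ ⟨Y, -, rfl⟩
  exact frobSq_nonneg _

variable {n : ℕ}

/-- The planted rank-one matrix: a scaled sign matrix of operator norm `256 √n`, a large constant
multiple of the typical norm of a standard Gaussian `n × n` matrix. -/
def spike (θ : (Fin n → Bool) × (Fin n → Bool)) : Matrix (Fin n) (Fin n) ℝ :=
  (256 / √n) • signMatrix θ

lemma rank_spike_le_one (θ : (Fin n → Bool) × (Fin n → Bool)) : (spike θ).rank ≤ 1 := by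
  rw [spike, signMatrix, ← smul_vecMulVec]
  exact rank_vecMulVec_le _ _

lemma sq_spikeScale_mul (hn : 0 < n) : (256 / √n) ^ 2 * n = 256 ^ 2 := by
  have hn' : (n : ℝ) ≠ 0 := Nat.cast_ne_zero.2 hn.ne'
  rw [div_pow, Real.sq_sqrt n.cast_nonneg, div_mul_cancel₀ _ hn']

lemma frobSq_spike (hn : 0 < n) (θ : (Fin n → Bool) × (Fin n → Bool)) :
    frobSq (spike θ) = 256 ^ 2 * n := by
  rw [spike, frobSq_smul, frobSq_signMatrix, sq (n : ℝ), ← mul_assoc, sq_spikeScale_mul hn]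

lemma two_mul_singVal_spike_add_le (hn : 0 < n) (θ : (Fin n → Bool) × (Fin n → Bool))
    {H : Matrix (Fin n) (Fin n) ℝ} (hH : ‖H‖ ≤ 16 * √n) :
    2 * singVal (spike θ + H) 2 ≤ singVal (spike θ + H) 1 := by
  refine two_mul_singVal_two_le (rank_spike_le_one θ) ?_
  have hnorm : ‖spike θ‖ = 256 * √n := by
    rw [← sq_eq_sq₀ (norm_nonneg _) (by positivity),
      ← frobSq_eq_l2_opNorm_sq_of_rank_le_one (rank_spike_le_one θ), frobSq_spike hn, mul_pow,
      Real.sq_sqrt n.cast_nonneg]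
  rw [hnorm]
  linarith [Real.sqrt_nonneg n]

lemma IsNearBestRankOne.frobSq_spike_sub_le (hn : 0 < n) {θ : (Fin n → Bool) × (Fin n → Bool)}
    {H B : Matrix (Fin n) (Fin n) ℝ} (hH : ‖H‖ ≤ 16 * √n) (hF : frobSq H ≤ 20 * n ^ 2)
    (hB : IsNearBestRankOne (1 / n) (spike θ + H) B) :
    frobSq (spike θ - B) ≤ frobSq (spike θ) / 2 := by
  have hn' : (0 : ℝ) < n := Nat.cast_pos.2 hn
  have hopt := hB.frobSq_sub_le_mul (by positivity) (rank_spike_le_one θ)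
  rw [add_sub_cancel_left] at hopt
  refine (frobSq_sub_le_of_frobSq_add_sub_le (rank_spike_le_one θ) hB.1 hopt
    (by positivity)).trans ?_
  have hop : ‖H‖ ^ 2 ≤ 256 * (n : ℝ) := by
    calc ‖H‖ ^ 2 ≤ (16 * √n : ℝ) ^ 2 := by gcongr
      _ = 256 * (n : ℝ) := by rw [mul_pow, Real.sq_sqrt n.cast_nonneg]; norm_num
  have hfrob : 2 * (1 / n) * frobSq H ≤ 40 * n := by
    calc 2 * (1 / n) * frobSq H ≤ 2 * (1 / n) * (20 * n ^ 2) := by gcongr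
      _ = 40 * n := by field_simp; norm_num
  rw [frobSq_spike hn]
  linarith

end Spikes

/-! ### From the planted problem to the round bound -/

section RandomizedAlgorithm

open scoped Matrix.Norms.L2Operator

variable {n k t : ℕ}

/-- Indicator of the event that `B` captures at least half of the squared Frobenius norm of the
planted matrix. -/
def spikeRecovery (θ : (Fin n → Bool) × (Fin n → Bool)) (B : Matrix (Fin n) (Fin n) ℝ) : ℝ :=
  if frobSq (spike θ - B) ≤ frobSq (spike θ) / 2 then 1 else 0

lemma spikeRecovery_mem_Icc (θ : (Fin n → Bool) × (Fin n → Bool))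
    (B : Matrix (Fin n) (Fin n) ℝ) : spikeRecovery θ B ∈ Set.Icc 0 1 := by
  unfold spikeRecovery
  split_ifs <;> simp

lemma spikeRecovery_eq_one {θ : (Fin n → Bool) × (Fin n → Bool)} {B : Matrix (Fin n) (Fin n) ℝ}
    (h : frobSq (spike θ - B) ≤ frobSq (spike θ) / 2) : spikeRecovery θ B = 1 :=
  if_pos h

lemma measurable_spikeRecovery {X : Type*} [MeasurableSpace X]
    (θ : (Fin n → Bool) × (Fin n → Bool)) {B : X → Matrix (Fin n) (Fin n) ℝ}
    (hB : ∀ i j, Measurable fun x => B x i j) : Measurable fun x => spikeRecovery θ (B x) := by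
  refine Measurable.ite (measurableSet_le ?_ measurable_const) measurable_const measurable_const
  simp only [frobSq, Matrix.sub_apply]
  exact Finset.measurable_sum _ fun i _ => Finset.measurable_sum _ fun j _ =>
    ((hB i j).const_sub _).pow_const 2

lemma expect_gaussianMean_spikeRecovery_le (hn : 0 < n) {Q : QueryMaps (n * n) k t}
    (hQ : Q.Valid) {out : (Fin t → Fin k → ℝ) → Matrix (Fin n) (Fin n) ℝ}
    (hout : ∀ i j, Measurable fun r => out r i j) :
    𝔼 θ, Q.gaussianMean (_root_.vec n (spike θ)) (fun r => spikeRecovery θ (out r)) ≤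
      4 / n + 2 * k / n ^ 2 * ((1 + 4 * 256 ^ 2) ^ t - 1) := by
  have hn' : (n : ℝ) ≠ 0 := Nat.cast_ne_zero.2 hn.ne'
  have hscale : (0 : ℝ) < 256 / √n := div_pos (by norm_num) (Real.sqrt_pos.2 (Nat.cast_pos.2 hn))
  have h := expect_gaussianMean_le (κ := 4 * 256 ^ 2) (ρ := k / (2 * n)) (A := 4 / n)
    (B := 4 / n * (1 - k / (2 * n))) (a := fun θ => _root_.vec n (spike θ))
    (f := fun θ r => spikeRecovery θ (out r)) (by norm_num) (by positivity)
    (fun M hM w hw => by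
      simpa only [spike, sq_spikeScale_mul hn, Fintype.card_fin] using
        query_energy_le hn hM (256 / √n) hw)
    hQ (fun θ => measurable_spikeRecovery θ hout) (fun θ r => spikeRecovery_mem_Icc θ (out r))
    (fun r w hw => (fixed_output_success_le hn hscale (out r) hw).trans_eq (by ring))
    (w := fun _ => 1) fun _ => one_pos
  simp only [one_mul, ent_const, Fintype.expect_const, zero_add, mul_one] at h
  refine h.trans_eq ?_
  field_simp
  ring

variable {Ω : Type*} [MeasurableSpace Ω]

/-- Query maps and outputs indexed by a seed in `Ω` form a randomized adaptive algorithm: every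
seed gives valid query maps, and queries and outputs are jointly measurable in the seed and the
history. -/
structure IsRandomizedAlgorithm (Qf : Ω → QueryMaps (n * n) k t)
    (out : Ω → (Fin t → Fin k → ℝ) → Matrix (Fin n) (Fin n) ℝ) : Prop where
  valid : ∀ ω, (Qf ω).Valid
  measurable_query : ∀ (j : Fin t) (i : Fin k) (l : Fin (n * n)),
    Measurable fun p : Ω × (Fin (j : ℕ) → Fin k → ℝ) => Qf p.1 j p.2 i l
  measurable_out : ∀ i j : Fin n,
    Measurable fun p : Ω × (Fin t → Fin k → ℝ) => out p.1 p.2 i j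

namespace IsRandomizedAlgorithm

variable {Qf : Ω → QueryMaps (n * n) k t}
  {out : Ω → (Fin t → Fin k → ℝ) → Matrix (Fin n) (Fin n) ℝ}

lemma measurable_spikeRecovery (h : IsRandomizedAlgorithm Qf out)
    (θ : (Fin n → Bool) × (Fin n → Bool)) (b : Fin (n * n) → ℝ) :
    Measurable fun x : Ω × (Fin (n * n) → ℝ) =>
      spikeRecovery θ (out x.1 ((Qf x.1).resp (b + x.2))) := by
  have hresp : Measurable fun x : Ω × (Fin (n * n) → ℝ) => (Qf x.1).resp (b + x.2) :=
    QueryMaps.measurable_resp (Q := fun x : Ω × (Fin (n * n) → ℝ) => Qf x.1)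
      (fun j i l => (h.measurable_query j i l).comp
        ((measurable_fst.comp measurable_fst).prodMk measurable_snd))
      (measurable_snd.const_add b)
  exact _root_.measurable_spikeRecovery θ fun i j =>
    (h.measurable_out i j).comp (measurable_fst.prodMk hresp)

variable {μ : Measure Ω} [IsProbabilityMeasure μ]

lemma integrable_spikeRecovery (h : IsRandomizedAlgorithm Qf out)
    (θ : (Fin n → Bool) × (Fin n → Bool)) (b : Fin (n * n) → ℝ) :
    Integrable (fun x : Ω × (Fin (n * n) → ℝ) =>
      spikeRecovery θ (out x.1 ((Qf x.1).resp (b + x.2)))) (μ.prod (stdGaussian _)) :=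
  integrable_of_mem_Icc (h.measurable_spikeRecovery θ b) fun _ => spikeRecovery_mem_Icc θ _

/-- Yao's principle: a randomized algorithm is a mixture of deterministic ones. -/
lemma expect_integral_gaussianMean_le (hn : 0 < n) (h : IsRandomizedAlgorithm Qf out) :
    𝔼 θ, ∫ ω, (Qf ω).gaussianMean (_root_.vec n (spike θ))
        (fun r => spikeRecovery θ (out ω r)) ∂μ ≤
      4 / n + 2 * k / n ^ 2 * ((1 + 4 * 256 ^ 2) ^ t - 1) := by
  have hint (θ : (Fin n → Bool) × (Fin n → Bool)) :
      Integrable (fun ω => (Qf ω).gaussianMean (_root_.vec n (spike θ))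
        (fun r => spikeRecovery θ (out ω r))) μ :=
    (h.integrable_spikeRecovery θ _).integral_prod_left
  rw [← integral_expect hint]
  refine (integral_mono (integrable_expect hint) (integrable_const _) fun ω =>
    expect_gaussianMean_spikeRecovery_le hn (h.valid ω) fun i j =>
      (h.measurable_out i j).comp (measurable_const.prodMk measurable_id)).trans_eq ?_
  rw [integral_const, probReal_univ, one_smul]

lemma le_integral_spikeRecovery (hn : 0 < n) (h : IsRandomizedAlgorithm Qf out) {p : ℝ}
    (hsuccess : ∀ A : Matrix (Fin n) (Fin n) ℝ, 2 * singVal A 2 ≤ singVal A 1 →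
      p ≤ μ.real {ω | IsNearBestRankOne (1 / n) A (out ω ((Qf ω).resp (_root_.vec n A)))})
    (θ : (Fin n → Bool) × (Fin n → Bool)) {G : Fin (n * n) → ℝ}
    (hop : ‖unvec G‖ ≤ 16 * √n) (hfrob : frobSq (unvec G) ≤ 20 * n ^ 2) :
    p ≤ ∫ ω, spikeRecovery θ (out ω ((Qf ω).resp (_root_.vec n (spike θ) + G))) ∂μ := by
  have hvec : _root_.vec n (spike θ + unvec G) = _root_.vec n (spike θ) + G :=
    congrArg (_root_.vec n (spike θ) + ·) (vec_unvec G)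
  have hmeas : Measurable fun ω =>
      spikeRecovery θ (out ω ((Qf ω).resp (_root_.vec n (spike θ) + G))) :=
    by simpa only [Function.comp_def] using
      (h.measurable_spikeRecovery θ (_root_.vec n (spike θ))).comp
        (measurable_prodMk_right (y := G))
  calc p ≤ μ.real {ω | IsNearBestRankOne (1 / n) (spike θ + unvec G)
          (out ω ((Qf ω).resp (_root_.vec n (spike θ) + G)))} :=
        hvec ▸ hsuccess _ (two_mul_singVal_spike_add_le hn θ hop)
    _ ≤ μ.real {ω | 1 ≤ spikeRecovery θ
          (out ω ((Qf ω).resp (_root_.vec n (spike θ) + G)))} :=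
        measureReal_mono fun ω hω => by
          rw [Set.mem_ofPred_eq, spikeRecovery_eq_one (hω.frobSq_spike_sub_le hn hop hfrob)]
    _ ≤ ∫ ω, spikeRecovery θ (out ω ((Qf ω).resp (_root_.vec n (spike θ) + G))) ∂μ := by
        simpa only [one_mul] using mul_meas_ge_le_integral_of_nonneg
          (.of_forall fun ω => (spikeRecovery_mem_Icc θ _).1)
          (integrable_of_mem_Icc hmeas fun _ => spikeRecovery_mem_Icc θ _) 1

lemma le_integral_gaussianMean (hn : 0 < n) (h : IsRandomizedAlgorithm Qf out) {p : ℝ}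
    (hp : 0 ≤ p)
    (hsuccess : ∀ A : Matrix (Fin n) (Fin n) ℝ, 2 * singVal A 2 ≤ singVal A 1 →
      p ≤ μ.real {ω | IsNearBestRankOne (1 / n) A (out ω ((Qf ω).resp (_root_.vec n A)))})
    (θ : (Fin n → Bool) × (Fin n → Bool)) :
    p * (9 / 10) ≤ ∫ ω, (Qf ω).gaussianMean (_root_.vec n (spike θ))
      (fun r => spikeRecovery θ (out ω r)) ∂μ := by
  have hint := h.integrable_spikeRecovery (μ := μ) θ (_root_.vec n (spike θ))
  calc p * (9 / 10)
      ≤ p * (stdGaussian (Fin (n * n))).real {G | p ≤ ∫ ω, spikeRecovery θ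
          (out ω ((Qf ω).resp (_root_.vec n (spike θ) + G))) ∂μ} := by
        gcongr
        exact (le_stdGaussian_norms_le hn).trans <| measureReal_mono fun G hG =>
          h.le_integral_spikeRecovery hn hsuccess θ hG.1 hG.2
    _ ≤ ∫ G, ∫ ω, spikeRecovery θ (out ω ((Qf ω).resp (_root_.vec n (spike θ) + G))) ∂μ
          ∂stdGaussian (Fin (n * n)) :=
        mul_meas_ge_le_integral_of_nonneg
          (.of_forall fun G => integral_nonneg fun ω => (spikeRecovery_mem_Icc θ _).1)
          hint.integral_prod_right p
    _ = ∫ ω, (Qf ω).gaussianMean (_root_.vec n (spike θ))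
          (fun r => spikeRecovery θ (out ω r)) ∂μ :=
        (integral_integral_swap hint).symm

lemma success_probability_le (hn : 0 < n) (h : IsRandomizedAlgorithm Qf out) {p : ℝ} (hp : 0 ≤ p)
    (hsuccess : ∀ A : Matrix (Fin n) (Fin n) ℝ, 2 * singVal A 2 ≤ singVal A 1 →
      p ≤ μ.real {ω | IsNearBestRankOne (1 / n) A (out ω ((Qf ω).resp (_root_.vec n A)))}) :
    p * (9 / 10) ≤ 4 / n + 2 * k / n ^ 2 * ((1 + 4 * 256 ^ 2) ^ t - 1) := by
  refine le_trans ?_ (h.expect_integral_gaussianMean_le (μ := μ) hn)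
  exact Finset.le_expect Finset.univ_nonempty fun θ _ =>
    h.le_integral_gaussianMean hn hp hsuccess θ

end IsRandomizedAlgorithm

/-- Bernoulli's inequality removes the constant factor `b` at the cost of a factor `m` in front of
the logarithm. -/
lemma log_le_mul_log_of_mul_le_pow_sub_one {b x y : ℝ} {m : ℕ} (hb : 0 ≤ b) (hm : 1 ≤ m * b)
    (hx : 0 < x) (h : b * x ≤ y ^ t - 1) : Real.log x ≤ m * Real.log y * t := by
  have hbern : x ≤ (1 + b * x) ^ m := by
    have hstep := one_add_mul_le_pow (show -2 ≤ b * x by linarith [mul_nonneg hb hx.le]) m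
    nlinarith
  have hbase : 0 < 1 + b * x := by positivity
  calc Real.log x ≤ Real.log ((1 + b * x) ^ m) := Real.log_le_log hx hbern
    _ = m * Real.log (1 + b * x) := Real.log_pow _ _
    _ ≤ m * Real.log (y ^ t) := by gcongr; linarith
    _ = m * Real.log y * t := by rw [Real.log_pow, mul_comm (t : ℝ), mul_assoc]

lemma one_le_log_log (hn : 27 ≤ n) : 1 ≤ Real.log (Real.log n) := by
  have hn' : (27 : ℝ) ≤ n := by exact_mod_cast hn
  have hlog : 3 ≤ Real.log n := by
    rw [Real.le_log_iff_exp_le (by linarith)]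
    calc Real.exp 3 = Real.exp 1 ^ 3 := by rw [← Real.exp_nat_mul]; norm_num
      _ ≤ 3 ^ 3 := by
          gcongr
          linarith [Real.exp_one_lt_d9]
      _ ≤ n := by linarith
  rw [Real.le_log_iff_exp_le (by linarith)]
  linarith [Real.exp_one_lt_d9]

theorem frobenius_LRA_round_lower_bound_general {p : ℝ} (hp : 0 < p) :
    ∃ (c : ℝ) (n₀ : ℕ), 0 < c ∧ ∀ (n k t : ℕ), n₀ ≤ n → 0 < k →
      ∀ (Ω : Type*) [MeasurableSpace Ω] (μ : Measure Ω) [IsProbabilityMeasure μ]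
        (Qf : Ω → QueryMaps (n * n) k t)
        (out : Ω → (Fin t → Fin k → ℝ) → Matrix (Fin n) (Fin n) ℝ),
        IsRandomizedAlgorithm Qf out →
        (∀ A : Matrix (Fin n) (Fin n) ℝ, 2 * singVal A 2 ≤ singVal A 1 →
          p ≤ μ.real
            {ω | IsNearBestRankOne (1 / n) A (out ω ((Qf ω).resp (_root_.vec n A)))}) →
        c * Real.log ((n : ℝ) ^ 2 / k) ≤ t := by
  obtain ⟨n₀, hn₀⟩ := exists_nat_ge (10 / p)
  obtain ⟨m, hm⟩ := exists_nat_ge (4 / p)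
  have hm_pos : (0 : ℝ) < m := (div_pos four_pos hp).trans_le hm
  have hgrowth : 0 < Real.log (1 + 4 * 256 ^ 2) := Real.log_pos (by norm_num)
  refine ⟨(m * Real.log (1 + 4 * 256 ^ 2))⁻¹, n₀, by positivity, ?_⟩
  intro n k t hn hk Ω _ μ _ Qf out halg hsuccess
  have hn_ge : 10 / p ≤ n := hn₀.trans (Nat.cast_le.2 hn)
  have hn' : (0 : ℝ) < n := (div_pos (by norm_num) hp).trans_le hn_ge
  have hk' : (0 : ℝ) < k := Nat.cast_pos.2 hk
  have hsucc := halg.success_probability_le (Nat.cast_pos.1 hn') hp.le hsuccess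
  have hsmall : 4 / (n : ℝ) ≤ p * (2 / 5) := by
    rw [div_le_iff₀ hp] at hn_ge
    rw [div_le_iff₀ hn']
    linarith
  have hpow : p / 4 * ((n : ℝ) ^ 2 / k) ≤ (1 + 4 * 256 ^ 2) ^ t - 1 := by
    have hhalf : p / 2 ≤ 2 * k / n ^ 2 * ((1 + 4 * 256 ^ 2) ^ t - 1) := by linarith
    rw [div_mul_eq_mul_div, le_div_iff₀ (by positivity)] at hhalf
    rw [← mul_div_assoc, div_le_iff₀ hk']
    linarith
  rw [inv_mul_le_iff₀ (by positivity)]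
  exact log_le_mul_log_of_mul_le_pow_sub_one (by positivity)
    (by rw [div_le_iff₀ hp] at hm; linarith) (by positivity) hpow

end RandomizedAlgorithm

/-- Round lower bound for `(1 + 1/n)`-approximate rank-one Frobenius norm low-rank
approximation on matrices with a singular value gap. -/
theorem frobenius_LRA_round_lower_bound :
    ∃ (c : ℝ) (n₀ : ℕ), 0 < c ∧
      ∀ (n k t : ℕ), n₀ ≤ n → n ≤ k → k ≤ n ^ 2 →
      ∀ (Ω : Type) [MeasurableSpace Ω] (μ : Measure Ω) [IsProbabilityMeasure μ]
        (Qf : Ω → QueryMaps (n * n) k t)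
        (out : Ω → (Fin t → Fin k → ℝ) → Matrix (Fin n) (Fin n) ℝ),
        (∀ ω, (Qf ω).Valid) →
        (∀ (j : Fin t) (i : Fin k) (l : Fin (n * n)),
            Measurable fun p : Ω × (Fin (j : ℕ) → Fin k → ℝ) => Qf p.1 j p.2 i l) →
        (∀ i j : Fin n,
            Measurable fun p : Ω × (Fin t → Fin k → ℝ) => out p.1 p.2 i j) →
        (∀ A : Matrix (Fin n) (Fin n) ℝ, 2 * singVal A 2 ≤ singVal A 1 →
            (99 / 100 : ℝ≥0∞) ≤
              μ {ω | (out ω (QueryMaps.resp (Qf ω) (vec n A))).rank ≤ 1 ∧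
                    frobSq (A - out ω (QueryMaps.resp (Qf ω) (vec n A)))
                      ≤ (1 + 1 / (n : ℝ)) * sInf {c' | ∃ X : Matrix (Fin n) (Fin n) ℝ,
                          X.rank ≤ 1 ∧ c' = frobSq (A - X)}}) →
        c * (Real.log ((n : ℝ) ^ 2 / k) / Real.log (Real.log n)) ≤ (t : ℝ) := by
  obtain ⟨c, n₀, hc, hround⟩ :=
    frobenius_LRA_round_lower_bound_general (p := 99 / 100) (by norm_num)
  refine ⟨c, max n₀ 27, hc, fun n k t hn hnk hkn Ω _ μ _ Qf out hQ hquery hout hsuccess => ?_⟩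
  obtain ⟨hn₀, hn27⟩ := max_le_iff.1 hn
  have hk : 0 < k := by omega
  have hratio : 1 ≤ (n : ℝ) ^ 2 / k :=
    (one_le_div (Nat.cast_pos.2 hk)).2 (by exact_mod_cast hkn)
  calc c * (Real.log ((n : ℝ) ^ 2 / k) / Real.log (Real.log n))
      ≤ c * Real.log ((n : ℝ) ^ 2 / k) := by
        gcongr
        exact div_le_self (Real.log_nonneg hratio) (one_le_log_log hn27)
    _ ≤ t := hround n k t hn₀ hk Ω μ Qf out ⟨hQ, hquery, hout⟩ fun A hA => by
        simpa only [measureReal_def, IsNearBestRankOne, ENNReal.toReal_div,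
          ENNReal.toReal_ofNat] using ENNReal.toReal_mono (measure_ne_top μ _) (hsuccess A hA)

end
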